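/- Let q > 2 and 0 < λ ≤ Λ, M > 0. There is a constant c₁ > 0 depending only on λ, Λ, M, n, and q such that for every embedded, regular C¹ curve u : ℝ/ℤ → ℝⁿ with ‖u'‖_{W^{1-1/q,q}} < ∞, λ ≤ |u'| ≤ Λ, and TP(u) ≤ M, and every C¹ map w : ℝ/ℤ → ℝⁿ with ‖w'‖_{W^{1-1/q,q}} < ∞, the first variation δTP(u)[w] = (d/dt) TP(u + t w) |_{t=0} exists and satisfies |δTP(u)[w]| ≤ c₁ · ‖u'‖_{W^{1-1/q,q}}^q · ‖w'‖_{W^{1-1/q,q}}. -/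

import Mathlib

open MeasureTheory Set Filter
open scoped RealInnerProductSpace ENNReal Topology

noncomputable section

/-- The distance on the circle `ℝ/ℤ` between the points represented by `x` and `y`. -/
def circDist (x y : ℝ) : ℝ := ‖((x - y : ℝ) : AddCircle (1 : ℝ))‖

/-- The representative of `z` modulo `1` lying in `(-1/2, 1/2]`. -/
def wrap (z : ℝ) : ℝ := 1 / 2 - Int.fract (1 / 2 - z)

/-- Squared wedge norm `|a ∧ b|² = |a|²|b|² - ⟨a,b⟩²`. -/
def wedgeSq {n : ℕ} (a b : EuclideanSpace ℝ (Fin n)) : ℝ :=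
  ‖a‖ ^ 2 * ‖b‖ ^ 2 - ⟪a, b⟫ ^ 2

/-- Wedge inner product `⟨a∧b, c∧d⟩ = ⟨a,c⟩⟨b,d⟩ - ⟨a,d⟩⟨b,c⟩`. -/
def wedgeInner {n : ℕ} (a b c d : EuclideanSpace ℝ (Fin n)) : ℝ :=
  ⟪a, c⟫ * ⟪b, d⟫ - ⟪a, d⟫ * ⟪b, c⟫

/-- Fundamental domain for double integrals over `(ℝ/ℤ)²`. -/
def unitSq : Set (ℝ × ℝ) := Ioc (0 : ℝ) 1 ×ˢ Ioc (0 : ℝ) 1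

/-- The tangent-point functional `TP` (extended-real-valued). -/
def TPe {n : ℕ} (q : ℝ) (u : ℝ → EuclideanSpace ℝ (Fin n)) : ℝ≥0∞ :=
  ENNReal.ofReal (1 / q) *
    ∫⁻ p in unitSq, ENNReal.ofReal
      (wedgeSq (deriv u p.2) (u p.1 - u p.2) ^ (q / 2) / ‖u p.1 - u p.2‖ ^ (2 * q))

/-- The tangent-point functional `TP` (real-valued). -/
def TPr {n : ℕ} (q : ℝ) (u : ℝ → EuclideanSpace ℝ (Fin n)) : ℝ := (TPe q u).toReal

/-- The `q`-th power of the Sobolev–Slobodeckii seminorm `[f]_{W^{s,q}}` on `ℝ/ℤ`. -/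
def sobSemPow {n : ℕ} (s q : ℝ) (f : ℝ → EuclideanSpace ℝ (Fin n)) : ℝ≥0∞ :=
  ∫⁻ p in unitSq, ENNReal.ofReal (‖f p.1 - f p.2‖ ^ q / circDist p.1 p.2 ^ (1 + s * q))

/-- The `W^{s,q}`-norm `‖f‖_{L^q} + [f]_{W^{s,q}}`. -/
def Wnorm {n : ℕ} (s q : ℝ) (f : ℝ → EuclideanSpace ℝ (Fin n)) : ℝ :=
  (∫ x in Ioc (0 : ℝ) 1, ‖f x‖ ^ q) ^ (1 / q) + (sobSemPow s q f).toReal ^ (1 / q)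

/-- The bi-Lipschitz constant `bil(u) = sup_{x ≢ y} |x-y|_{ℝ/ℤ}/|u(x)-u(y)|`. -/
def bil {n : ℕ} (u : ℝ → EuclideanSpace ℝ (Fin n)) : ℝ≥0∞ :=
  ⨆ (x : ℝ) (y : ℝ) (_ : circDist x y ≠ 0),
    ENNReal.ofReal (circDist x y) / ENNReal.ofReal ‖u x - u y‖

/-- The `L^∞`-norm of the derivative of `u`. -/
def linfD {n : ℕ} (u : ℝ → EuclideanSpace ℝ (Fin n)) : ℝ≥0∞ :=
  ⨆ x : ℝ, (‖deriv u x‖₊ : ℝ≥0∞)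

/-- A periodic curve is embedded if it is injective on the circle `ℝ/ℤ`. -/
def Embedded {n : ℕ} (u : ℝ → EuclideanSpace ℝ (Fin n)) : Prop :=
  ∀ x y : ℝ, u x = u y → ((x : AddCircle (1 : ℝ)) = (y : AddCircle (1 : ℝ)))

/-- A curve is regular if `min_{ℝ/ℤ} |u'| > 0`. -/
def Regular {n : ℕ} (u : ℝ → EuclideanSpace ℝ (Fin n)) : Prop :=
  0 < ⨅ x : ℝ, ‖deriv u x‖

/-- Orthogonal projection of `b` onto the orthogonal complement of `ℝ a`. -/
def projPerp {n : ℕ} (a b : EuclideanSpace ℝ (Fin n)) : EuclideanSpace ℝ (Fin n) :=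
  b - (⟪b, a⟫ / ‖a‖ ^ 2) • a

/-- The classical tangent-point functional (extended-real-valued). -/
def TPcle {n : ℕ} (q : ℝ) (u : ℝ → EuclideanSpace ℝ (Fin n)) : ℝ≥0∞ :=
  ENNReal.ofReal (1 / q) *
    ∫⁻ p in unitSq, ENNReal.ofReal
      (‖projPerp (deriv u p.2) (u p.1 - u p.2)‖ ^ q / ‖u p.1 - u p.2‖ ^ (2 * q) *
        (‖deriv u p.1‖ * ‖deriv u p.2‖))

/-- The integrand of the functional `M(u; v, w)`. -/
def Mintegrand {n : ℕ} (q : ℝ) (u v w : ℝ → EuclideanSpace ℝ (Fin n)) (p : ℝ × ℝ) : ℝ :=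
  wedgeSq (deriv u p.2) (u p.1 - u p.2) ^ ((q - 2) / 2) / ‖u p.1 - u p.2‖ ^ (2 * q) *
    wedgeInner (deriv u p.2) (u p.1 - u p.2) (deriv v p.2)
      (w p.1 - w p.2 - wrap (p.1 - p.2) • deriv w p.2)

/-- The functional `M(u; v, w)` appearing in the first variation of `TP`. -/
def Mfun {n : ℕ} (q : ℝ) (u v w : ℝ → EuclideanSpace ℝ (Fin n)) : ℝ :=
  ∫ p in unitSq, Mintegrand q u v w p

/-- The integrand of the functional `A(u; v, w)`. -/
def Aintegrand {n : ℕ} (q : ℝ) (u v w : ℝ → EuclideanSpace ℝ (Fin n)) (p : ℝ × ℝ) : ℝ :=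
  wedgeSq (deriv u p.2) (u p.1 - u p.2) ^ (q / 2) / ‖u p.1 - u p.2‖ ^ (2 * q + 2) *
    ⟪v p.1 - v p.2, w p.1 - w p.2⟫

/-- The functional `A(u; v, w)` appearing in the first variation of `TP`. -/
def Afun {n : ℕ} (q : ℝ) (u v w : ℝ → EuclideanSpace ℝ (Fin n)) : ℝ :=
  ∫ p in unitSq, Aintegrand q u v w p

/-- The first variation `δTP(u)[w] = M(u;u,w) + M(u;w,u) - 2A(u;u,w)`. -/
def deltaTP {n : ℕ} (q : ℝ) (u w : ℝ → EuclideanSpace ℝ (Fin n)) : ℝ :=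
  Mfun q u u w + Mfun q u w u - 2 * Afun q u u w

/-- The `H²` inner product on periodic curves. -/
def H2inner (v w : ℝ → EuclideanSpace ℝ (Fin 3)) : ℝ :=
  ∫ x in Ioc (0 : ℝ) 1,
    (⟪v x, w x⟫ + ⟪deriv v x, deriv w x⟫ + ⟪deriv (deriv v) x, deriv (deriv w) x⟫)

/-- The total energy `E(u) = (κ/2)∫|u''|² + ρ TP(u)`. -/
def energyE (κ ρ q : ℝ) (u : ℝ → EuclideanSpace ℝ (Fin 3)) : ℝ :=
  κ / 2 * (∫ x in Ioc (0 : ℝ) 1, ‖deriv (deriv u) x‖ ^ 2) + ρ * TPr q u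

/-!
The energy density at `(x, y)` measures the angle between the tangent line at `y` and the chord
`u x - u y`. If this angle is small at both ends then the two tangent lines are close to each other,
so bounded energy controls their oscillation on small intervals, and chaining over dyadic scales
as in Morrey's argument makes the tangent lines Hölder continuous with uniform constants. Hence
`u` is bi-Lipschitz at a uniform small scale. Two strands that are not close in parameter but
realize the smallest distance `d` meet the connecting chord orthogonally, so windows of size
comparable to `d` around them contribute at least a multiple of `d ^ (2 - q)` to the energy; as
`q > 2`, this bounds `d` from below. Together these give a bi-Lipschitz constant for `u` depending
only on the data.

Since `u' ∧ ·` annihilates multiples of `u'`, the first-variation integrand depends on `u` and `w`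
only through first-order Taylor remainders `v x - v y - (x - y) v' y` and through products of the
remainder of `u` with `w'`. By Jensen's inequality the `L^q` norm of `|x - y| ^ (-2)` times
the remainder is at most the seminorm `[v']_{W^{1-1/q,q}}`, so Hölder's inequality bounds the
integral and dominated convergence justifies differentiating under it.
-/

section LIntegral

instance isProbabilityMeasure_restrict_Ioc_zero_one :
    IsProbabilityMeasure ((volume : Measure ℝ).restrict (Ioc 0 1)) :=
  ⟨by simp⟩

theorem rpow_lintegral_le_lintegral_rpow {α : Type*} [MeasurableSpace α] {μ : Measure α}
    [IsProbabilityMeasure μ] {q : ℝ} (hq : 1 ≤ q) {f : α → ℝ≥0∞} (hf : AEMeasurable f μ) :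
    (∫⁻ x, f x ∂μ) ^ q ≤ ∫⁻ x, f x ^ q ∂μ := by
  have h := eLpNorm'_le_eLpNorm'_of_exponent_le one_pos hq μ hf.aestronglyMeasurable
  simpa [eLpNorm'] using
    (ENNReal.le_rpow_inv_iff (zero_lt_one.trans_le hq)).1 (by simpa [eLpNorm'] using h)

theorem lintegral_comp_affine (f : ℝ → ℝ≥0∞) (a : ℝ) {r : ℝ} (hr : r ≠ 0) {s : Set ℝ}
    (hs : MeasurableSet s) :
    ∫⁻ σ in s, f (a + r * σ) =
      ENNReal.ofReal |r|⁻¹ * ∫⁻ x in (fun σ => a + r * σ) '' s, f x := by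
  rw [lintegral_image_eq_lintegral_abs_deriv_mul (f := fun σ => a + r * σ) (f' := fun _ => r) hs
    (fun x _ => by simpa using (((hasDerivAt_id x).const_mul r).const_add a).hasDerivWithinAt)
    (fun x _ y _ h => by simpa [hr] using h),
    lintegral_const_mul' _ _ ENNReal.ofReal_ne_top, ← mul_assoc,
    ← ENNReal.ofReal_mul (by positivity), inv_mul_cancel₀ (abs_ne_zero.2 hr),
    ENNReal.ofReal_one, one_mul]

theorem lintegral_Ioc_add_one_eq {f : ℝ → ℝ≥0∞} (hf : Function.Periodic f 1) (a : ℝ) :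
    ∫⁻ x in Ioc a (a + 1), f x = ∫⁻ x in Ioc (0 : ℝ) 1, f x := by
  have h (b : ℝ) : ∫⁻ x in Ioc b (b + 1), f x = ∫⁻ x : AddCircle (1 : ℝ), hf.lift x := by
    simp [← AddCircle.lintegral_preimage 1 b]
  simpa using (h a).trans (h 0).symm

theorem lintegral_comp_affine_le {f : ℝ → ℝ≥0∞} (hf : Function.Periodic f 1) (a : ℝ) {r : ℝ}
    (hr0 : r ≠ 0) (hr1 : |r| ≤ 1) :
    ∫⁻ σ in Ioc (0 : ℝ) 1, f (a + r * σ) ≤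
      ENNReal.ofReal |r|⁻¹ * ∫⁻ x in Ioc (0 : ℝ) 1, f x := by
  rw [lintegral_comp_affine f a hr0 measurableSet_Ioc]
  refine mul_le_mul_right ?_ _
  obtain ⟨h₁, h₂⟩ := abs_le.1 hr1
  rcases lt_or_gt_of_ne hr0 with h | h
  · rw [← lintegral_Ioc_add_one_eq hf (a - 1), ← setLIntegral_congr Ico_ae_eq_Ioc]
    refine lintegral_mono_set ?_
    rintro _ ⟨σ, ⟨hσ₀, hσ₁⟩, rfl⟩
    constructor <;> dsimp only <;> nlinarith
  · rw [← lintegral_Ioc_add_one_eq hf a]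
    refine lintegral_mono_set ?_
    rintro _ ⟨σ, ⟨hσ₀, hσ₁⟩, rfl⟩
    constructor <;> dsimp only <;> nlinarith

theorem lintegral_lintegral_comp_affine_le {K : ℝ → ℝ → ℝ≥0∞}
    (hK₁ : ∀ t, Function.Periodic (K · t) 1) (hK₂ : ∀ s, Function.Periodic (K s) 1) (a b : ℝ)
    {r ρ : ℝ} (hr0 : r ≠ 0) (hr1 : |r| ≤ 1) (hρ0 : ρ ≠ 0) (hρ1 : |ρ| ≤ 1) :
    ∫⁻ σ in Ioc (0 : ℝ) 1, ∫⁻ τ in Ioc (0 : ℝ) 1, K (a + r * σ) (b + ρ * τ) ≤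
      ENNReal.ofReal |ρ|⁻¹ *
        (ENNReal.ofReal |r|⁻¹ * ∫⁻ s in Ioc (0 : ℝ) 1, ∫⁻ t in Ioc (0 : ℝ) 1, K s t) := by
  calc ∫⁻ σ in Ioc (0 : ℝ) 1, ∫⁻ τ in Ioc (0 : ℝ) 1, K (a + r * σ) (b + ρ * τ)
      ≤ ∫⁻ σ in Ioc (0 : ℝ) 1, ENNReal.ofReal |ρ|⁻¹ *
          ∫⁻ t in Ioc (0 : ℝ) 1, K (a + r * σ) t := by
        gcongr with σ
        exact lintegral_comp_affine_le (hK₂ _) b hρ0 hρ1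
    _ ≤ _ := by
        rw [lintegral_const_mul' _ _ ENNReal.ofReal_ne_top]
        gcongr
        exact lintegral_comp_affine_le (f := fun s => ∫⁻ t in Ioc (0 : ℝ) 1, K s t)
          (fun s => lintegral_congr fun t => hK₁ t s) a hr0 hr1

theorem lintegral_Ioc_comp_const_sub (f : ℝ → ℝ≥0∞) :
    ∫⁻ σ in Ioc (0 : ℝ) 1, f (1 - σ) = ∫⁻ σ in Ioc (0 : ℝ) 1, f σ := by
  have h := lintegral_comp_affine f 1 (neg_ne_zero.2 one_ne_zero)
    (measurableSet_Ioc (a := 0) (b := 1))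
  simpa [← sub_eq_add_neg, Set.image_const_sub_Ioc, setLIntegral_congr Ico_ae_eq_Ioc] using h

end LIntegral

/-! ### Morrey's estimate -/

/-- The constant of the one-dimensional Morrey estimate with exponent `1 - 2 / q`: a geometric
series over dyadic scales, doubled because oscillations are measured from both endpoints. -/
def morreyConst (q : ℝ) : ℝ := 2 * (2 ^ (1 / q) / (1 - (1 / 2) ^ (1 - 2 / q)))

theorem one_sub_half_rpow_pos {α : ℝ} (hα : 0 < α) : 0 < 1 - (1 / 2 : ℝ) ^ α :=
  sub_pos.2 (Real.rpow_lt_one (by norm_num) (by norm_num) hα)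

theorem one_sub_two_div_pos {q : ℝ} (hq : 2 < q) : 0 < 1 - 2 / q := by
  rw [sub_pos, div_lt_one (by linarith)]; exact hq

theorem morreyConst_pos {q : ℝ} (hq : 2 < q) : 0 < morreyConst q := by
  have := one_sub_half_rpow_pos (one_sub_two_div_pos hq)
  unfold morreyConst
  positivity

theorem le_of_le_add_halving {D : ℝ → ℝ≥0∞} (hD : Tendsto D (𝓝 0) (𝓝 0)) {α K : ℝ} (hα : 0 < α)
    (hK : 0 ≤ K) (hstep : ∀ r, |r| ≤ 1 → D r ≤ D (r / 2) + ENNReal.ofReal (K * |r| ^ α))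
    {r : ℝ} (hr : |r| ≤ 1) :
    D r ≤ ENNReal.ofReal (K / (1 - (1 / 2) ^ α) * |r| ^ α) := by
  have hpos := one_sub_half_rpow_pos hα
  set C := K / (1 - (1 / 2) ^ α)
  have hC : C * (1 / 2) ^ α + K = C := by
    linarith [div_mul_cancel₀ K hpos.ne', mul_one_sub C ((1 / 2) ^ α)]
  have telescope (k : ℕ) : ∀ r, |r| ≤ 1 → D r ≤ D (r / 2 ^ k) + ENNReal.ofReal (C * |r| ^ α) := by
    induction k with
    | zero => intro r _; simp
    | succ k ih =>
      intro r hr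
      have hr2 : |r / 2| = |r| * (1 / 2) := by rw [abs_div, abs_two]; ring
      calc D r ≤ D (r / 2) + ENNReal.ofReal (K * |r| ^ α) := hstep r hr
        _ ≤ D (r / 2 / 2 ^ k) + ENNReal.ofReal (C * |r / 2| ^ α) +
            ENNReal.ofReal (K * |r| ^ α) := by
          gcongr
          exact ih (r / 2) (by linarith [abs_nonneg r])
        _ = D (r / 2 ^ (k + 1)) + ENNReal.ofReal ((C * (1 / 2) ^ α + K) * |r| ^ α) := by
          rw [add_assoc, ← ENNReal.ofReal_add (by positivity) (by positivity), hr2,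
            Real.mul_rpow (abs_nonneg r) (by norm_num), div_div, ← pow_succ']
          ring_nf
        _ = _ := by rw [hC]
  have hlim : Tendsto (fun k : ℕ => r / 2 ^ k) atTop (𝓝 0) := by
    simpa [div_eq_mul_inv] using
      (tendsto_pow_atTop_nhds_zero_of_lt_one (r := (2 : ℝ)⁻¹)
        (by norm_num) (by norm_num)).const_mul r
  simpa using ge_of_tendsto' ((hD.comp hlim).add_const (ENNReal.ofReal (C * |r| ^ α)))
    fun k => telescope k r hr

section Morrey

variable {X : Type*} [PseudoMetricSpace X] {f : ℝ → X}

theorem lintegral_edist_le_add {α : Type*} [MeasurableSpace α] {μ : Measure α}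
    [IsProbabilityMeasure μ] {g h : α → X} (c : X) (hh : Measurable fun τ => edist (h τ) c) :
    ∫⁻ σ, edist (g σ) c ∂μ ≤
      (∫⁻ τ, edist (h τ) c ∂μ) + ∫⁻ σ, ∫⁻ τ, edist (g σ) (h τ) ∂μ ∂μ := by
  calc ∫⁻ σ, edist (g σ) c ∂μ = ∫⁻ σ, ∫⁻ _, edist (g σ) c ∂μ ∂μ := by simp
    _ ≤ ∫⁻ σ, ∫⁻ τ, edist (h τ) c + edist (g σ) (h τ) ∂μ ∂μ := by
      gcongr with σ τ
      rw [add_comm]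
      exact edist_triangle _ _ _
    _ = _ := by simp [lintegral_add_left hh, lintegral_add_left measurable_const]

theorem tendsto_lintegral_edist_zero (hf : Continuous f) (a : ℝ) :
    Tendsto (fun r => ∫⁻ σ in Ioc (0 : ℝ) 1, edist (f (a + r * σ)) (f a)) (𝓝 0) (𝓝 0) := by
  refine ENNReal.tendsto_nhds_zero.2 fun ε hε => ?_
  obtain ⟨δ, hδ, hball⟩ := Metric.eventually_nhds_iff_ball.1
    ((hf.tendsto a).eventually (Metric.closedEBall_mem_nhds (f a) hε))
  filter_upwards [Metric.ball_mem_nhds (0 : ℝ) hδ] with r hr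
  calc ∫⁻ σ in Ioc (0 : ℝ) 1, edist (f (a + r * σ)) (f a)
      ≤ ∫⁻ _ in Ioc (0 : ℝ) 1, ε := by
        refine setLIntegral_mono' measurableSet_Ioc fun σ hσ => hball _ ?_
        rw [Metric.mem_ball, Real.dist_eq, add_sub_cancel_left, abs_mul, abs_of_pos hσ.1]
        exact (mul_le_of_le_one_right (abs_nonneg r) hσ.2).trans_lt (by simpa using hr)
    _ = ε := by simp

theorem lintegral_edist_le_of_halving (hf : Continuous f) {α K : ℝ} (hα : 0 < α) (hK : 0 ≤ K)
    (a : ℝ) (hscale : ∀ r : ℝ, |r| ≤ 1 →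
      ∫⁻ σ in Ioc (0 : ℝ) 1, ∫⁻ τ in Ioc (0 : ℝ) 1, edist (f (a + r * σ)) (f (a + r / 2 * τ)) ≤
        ENNReal.ofReal (K * |r| ^ α)) {r : ℝ} (hr : |r| ≤ 1) :
    ∫⁻ σ in Ioc (0 : ℝ) 1, edist (f (a + r * σ)) (f a) ≤
      ENNReal.ofReal (K / (1 - (1 / 2) ^ α) * |r| ^ α) := by
  refine le_of_le_add_halving (tendsto_lintegral_edist_zero hf a) hα hK (fun r hr => ?_) hr
  have hmeas : Measurable fun τ : ℝ => edist (f (a + r / 2 * τ)) (f a) :=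
    Continuous.measurable (by fun_prop)
  exact (lintegral_edist_le_add (f a) hmeas).trans (by gcongr; exact hscale r hr)

theorem dist_le_of_lintegral_edist_le (hf : Continuous f) {α C : ℝ} (hC : 0 ≤ C)
    (hmean : ∀ a r : ℝ, |r| ≤ 1 → ∫⁻ σ in Ioc (0 : ℝ) 1, edist (f (a + r * σ)) (f a) ≤
      ENNReal.ofReal (C * |r| ^ α)) {s t : ℝ} (hst : |s - t| ≤ 1) :
    dist (f s) (f t) ≤ 2 * (C * |s - t| ^ α) := by
  have hrefl : ∫⁻ σ in Ioc (0 : ℝ) 1, edist (f (t + (s - t) * σ)) (f s) =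
      ∫⁻ σ in Ioc (0 : ℝ) 1, edist (f (s + (t - s) * σ)) (f s) := by
    rw [← lintegral_Ioc_comp_const_sub]
    ring_nf
  have hmeas : Measurable fun σ : ℝ => edist (f (t + (s - t) * σ)) (f s) :=
    Continuous.measurable (by fun_prop)
  rw [← ENNReal.ofReal_le_ofReal_iff (by positivity), ← edist_dist]
  calc edist (f s) (f t) = ∫⁻ _ in Ioc (0 : ℝ) 1, edist (f s) (f t) := by simp
    _ ≤ ∫⁻ σ in Ioc (0 : ℝ) 1,
        edist (f (t + (s - t) * σ)) (f s) + edist (f (t + (s - t) * σ)) (f t) := by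
      gcongr
      exact edist_triangle_left _ _ _
    _ ≤ ENNReal.ofReal (C * |s - t| ^ α) + ENNReal.ofReal (C * |s - t| ^ α) := by
      rw [lintegral_add_left hmeas, hrefl]
      refine add_le_add ?_ (hmean t _ hst)
      rw [abs_sub_comm]
      exact hmean s _ (by rwa [abs_sub_comm])
    _ = _ := by rw [← ENNReal.ofReal_add (by positivity) (by positivity), two_mul]

variable {q A : ℝ} {K : ℝ → ℝ → ℝ≥0∞}

theorem lintegral_edist_rpow_le_of_kernel (hq : 0 ≤ q)
    (hK₁ : ∀ t, Function.Periodic (K · t) 1) (hK₂ : ∀ s, Function.Periodic (K s) 1)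
    (hle : ∀ s t, edist (f s) (f t) ^ q ≤ ENNReal.ofReal (|s - t| ^ q) * K s t)
    (hA : ∫⁻ s in Ioc (0 : ℝ) 1, ∫⁻ t in Ioc (0 : ℝ) 1, K s t ≤ ENNReal.ofReal A)
    (a : ℝ) {r : ℝ} (hr0 : r ≠ 0) (hr1 : |r| ≤ 1) :
    ∫⁻ σ in Ioc (0 : ℝ) 1, ∫⁻ τ in Ioc (0 : ℝ) 1,
      edist (f (a + r * σ)) (f (a + r / 2 * τ)) ^ q ≤ ENNReal.ofReal (2 * A * |r| ^ (q - 2)) := by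
  have hr : 0 < |r| := abs_pos.2 hr0
  have hr2 : |r / 2| = |r| / 2 := by rw [abs_div, abs_two]
  calc ∫⁻ σ in Ioc (0 : ℝ) 1, ∫⁻ τ in Ioc (0 : ℝ) 1,
      edist (f (a + r * σ)) (f (a + r / 2 * τ)) ^ q
      ≤ ∫⁻ σ in Ioc (0 : ℝ) 1, ∫⁻ τ in Ioc (0 : ℝ) 1,
        ENNReal.ofReal (|r| ^ q) * K (a + r * σ) (a + r / 2 * τ) := by
        refine setLIntegral_mono' measurableSet_Ioc fun σ hσ =>
          setLIntegral_mono' measurableSet_Ioc fun τ hτ => ?_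
        have hdist : |(a + r * σ) - (a + r / 2 * τ)| ≤ |r| := by
          rw [show (a + r * σ) - (a + r / 2 * τ) = r * (σ - τ / 2) by ring, abs_mul]
          refine mul_le_of_le_one_right hr.le (abs_le.2 ⟨?_, ?_⟩) <;>
            linarith [hσ.1, hσ.2, hτ.1, hτ.2]
        exact (hle _ _).trans (by gcongr)
    _ = ENNReal.ofReal (|r| ^ q) * ∫⁻ σ in Ioc (0 : ℝ) 1, ∫⁻ τ in Ioc (0 : ℝ) 1,
        K (a + r * σ) (a + r / 2 * τ) := by
        simp_rw [lintegral_const_mul' _ _ ENNReal.ofReal_ne_top]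
    _ ≤ ENNReal.ofReal (|r| ^ q) * (ENNReal.ofReal |r / 2|⁻¹ * (ENNReal.ofReal |r|⁻¹ *
          ENNReal.ofReal A)) := by
        gcongr
        refine (lintegral_lintegral_comp_affine_le hK₁ hK₂ a a hr0 hr1 (by simpa using hr0)
          (by linarith)).trans ?_
        gcongr
    _ = _ := by
        rw [← ENNReal.ofReal_mul (by positivity), ← ENNReal.ofReal_mul (by positivity),
          ← ENNReal.ofReal_mul (by positivity), hr2, Real.rpow_sub hr, Real.rpow_two]
        congr 1
        field_simp

theorem lintegral_edist_le_of_kernel (hf : Continuous f) (hq : 1 ≤ q) (hA0 : 0 ≤ A)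
    (hK₁ : ∀ t, Function.Periodic (K · t) 1) (hK₂ : ∀ s, Function.Periodic (K s) 1)
    (hle : ∀ s t, edist (f s) (f t) ^ q ≤ ENNReal.ofReal (|s - t| ^ q) * K s t)
    (hA : ∫⁻ s in Ioc (0 : ℝ) 1, ∫⁻ t in Ioc (0 : ℝ) 1, K s t ≤ ENNReal.ofReal A)
    (a : ℝ) {r : ℝ} (hr : |r| ≤ 1) :
    ∫⁻ σ in Ioc (0 : ℝ) 1, ∫⁻ τ in Ioc (0 : ℝ) 1, edist (f (a + r * σ)) (f (a + r / 2 * τ)) ≤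
      ENNReal.ofReal ((2 * A) ^ (1 / q) * |r| ^ (1 - 2 / q)) := by
  have hq0 : 0 < q := one_pos.trans_le hq
  rcases eq_or_ne r 0 with rfl | hr0
  · simp
  have hmeas : Measurable fun p : ℝ × ℝ => edist (f (a + r * p.1)) (f (a + r / 2 * p.2)) :=
    Continuous.measurable (by fun_prop)
  have hroot : (2 * A) ^ (1 / q) * |r| ^ (1 - 2 / q) = (2 * A * |r| ^ (q - 2)) ^ (1 / q) := by
    rw [Real.mul_rpow (x := 2 * A) (by positivity) (by positivity), ← Real.rpow_mul (abs_nonneg r)]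
    field_simp
  rw [hroot, ← ENNReal.ofReal_rpow_of_nonneg (by positivity) (by positivity), one_div,
    ENNReal.le_rpow_inv_iff hq0]
  calc (∫⁻ σ in Ioc (0 : ℝ) 1, ∫⁻ τ in Ioc (0 : ℝ) 1,
        edist (f (a + r * σ)) (f (a + r / 2 * τ))) ^ q
      ≤ ∫⁻ σ in Ioc (0 : ℝ) 1, (∫⁻ τ in Ioc (0 : ℝ) 1,
        edist (f (a + r * σ)) (f (a + r / 2 * τ))) ^ q :=
        rpow_lintegral_le_lintegral_rpow hq hmeas.lintegral_prod_right'.aemeasurable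
    _ ≤ ∫⁻ σ in Ioc (0 : ℝ) 1, ∫⁻ τ in Ioc (0 : ℝ) 1,
        edist (f (a + r * σ)) (f (a + r / 2 * τ)) ^ q := by
        gcongr with σ
        exact rpow_lintegral_le_lintegral_rpow hq
          (hmeas.comp (measurable_prodMk_left (x := σ))).aemeasurable
    _ ≤ _ := lintegral_edist_rpow_le_of_kernel hq0.le hK₁ hK₂ hle hA a hr0 hr

theorem dist_le_of_kernel (hf : Continuous f) (hq : 2 < q) (hA0 : 0 ≤ A)
    (hK₁ : ∀ t, Function.Periodic (K · t) 1) (hK₂ : ∀ s, Function.Periodic (K s) 1)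
    (hle : ∀ s t, edist (f s) (f t) ^ q ≤ ENNReal.ofReal (|s - t| ^ q) * K s t)
    (hA : ∫⁻ s in Ioc (0 : ℝ) 1, ∫⁻ t in Ioc (0 : ℝ) 1, K s t ≤ ENNReal.ofReal A)
    {s t : ℝ} (hst : |s - t| ≤ 1) :
    dist (f s) (f t) ≤ morreyConst q * A ^ (1 / q) * |s - t| ^ (1 - 2 / q) := by
  have hα := one_sub_two_div_pos hq
  have hpos := one_sub_half_rpow_pos hα
  refine (dist_le_of_lintegral_edist_le hf (by positivity) (fun a r hr =>
    lintegral_edist_le_of_halving hf hα (by positivity) a (fun r hr =>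
      lintegral_edist_le_of_kernel hf (by linarith) hA0 hK₁ hK₂ hle hA a hr) hr) hst).trans_eq ?_
  rw [Real.mul_rpow two_pos.le hA0, morreyConst]
  ring

end Morrey

/-! ### The circle distance and the Sobolev–Slobodeckiĭ norm -/

section Wrap

theorem wrap_eq_add (z : ℝ) : wrap z = z + ⌊1 / 2 - z⌋ := by
  rw [wrap, Int.fract]
  ring

theorem abs_wrap_le_half (z : ℝ) : |wrap z| ≤ 1 / 2 := by
  have h₀ := Int.fract_nonneg (1 / 2 - z)
  have h₁ := Int.fract_lt_one (1 / 2 - z)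
  rw [wrap, abs_le]
  constructor <;> linarith

theorem wrap_of_mem {z : ℝ} (hz : z ∈ Ioc (-(1 / 2) : ℝ) (1 / 2)) : wrap z = z := by
  rw [wrap, Int.fract_eq_self.2 ⟨by linarith [hz.2], by linarith [hz.1]⟩]
  ring

theorem abs_wrap_le_abs (z : ℝ) : |wrap z| ≤ |z| := by
  by_cases h : z ∈ Ioc (-(1 / 2) : ℝ) (1 / 2)
  · rw [wrap_of_mem h]
  · refine (abs_wrap_le_half _).trans ?_
    by_contra! hz
    exact h ⟨(abs_lt.1 hz).1, (abs_lt.1 hz).2.le⟩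

theorem periodic_wrap : Function.Periodic wrap 1 := fun z => by
  rw [wrap, wrap, show 1 / 2 - (z + 1) = 1 / 2 - z - 1 by ring, Int.fract_sub_one]

theorem circDist_eq_abs_wrap (x y : ℝ) : circDist x y = |wrap (x - y)| := by
  have h : ((x - y : ℝ) : AddCircle (1 : ℝ)) = ((wrap (x - y) : ℝ) : AddCircle (1 : ℝ)) := by
    rw [wrap_eq_add, AddCircle.coe_add]
    simp
  rw [circDist, h, AddCircle.norm_coe_eq_abs_iff 1 one_ne_zero, abs_one]
  exact abs_wrap_le_half _

theorem measurable_wrap : Measurable wrap := by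
  unfold wrap
  fun_prop

theorem map_add_wrap_of_periodic {X : Type*} {f : ℝ → X}
    (hf : Function.Periodic f 1) (x y : ℝ) : f (y + wrap (x - y)) = f x := by
  rw [wrap_eq_add, ← add_assoc, add_sub_cancel]
  simpa using hf.int_mul ⌊1 / 2 - (x - y)⌋ x

end Wrap

section Sobolev

variable {n : ℕ} {q : ℝ} {f : ℝ → EuclideanSpace ℝ (Fin n)}

theorem setLIntegral_unitSq_eq {F : ℝ × ℝ → ℝ≥0∞} (hF : Measurable F) :
    ∫⁻ p in unitSq, F p = ∫⁻ x in Ioc (0 : ℝ) 1, ∫⁻ y in Ioc (0 : ℝ) 1, F (x, y) := by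
  rw [unitSq, Measure.volume_eq_prod, ← Measure.prod_restrict, lintegral_prod _ hF.aemeasurable]

theorem setLIntegral_unitSq_comp_swap (F : ℝ × ℝ → ℝ≥0∞) :
    ∫⁻ p in unitSq, F p.swap = ∫⁻ p in unitSq, F p := by
  rw [unitSq, Measure.volume_eq_prod, ← Measure.prod_restrict, lintegral_prod_swap]

theorem sobSemPow_eq (hq : q ≠ 0) (f : ℝ → EuclideanSpace ℝ (Fin n)) :
    sobSemPow (1 - 1 / q) q f =
      ∫⁻ p in unitSq, ENNReal.ofReal (‖f p.1 - f p.2‖ ^ q / |wrap (p.1 - p.2)| ^ q) := by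
  have hexp : 1 + (1 - 1 / q) * q = q := by field_simp; ring
  simp only [sobSemPow, circDist_eq_abs_wrap, hexp]

theorem measurable_sobKernel (q : ℝ) (hf : Continuous f) : Measurable fun p : ℝ × ℝ =>
    ENNReal.ofReal (‖f p.1 - f p.2‖ ^ q / |wrap (p.1 - p.2)| ^ q) := by
  have hnum : Measurable fun p : ℝ × ℝ => ‖f p.1 - f p.2‖ := Continuous.measurable (by fun_prop)
  have hden : Measurable fun p : ℝ × ℝ => |wrap (p.1 - p.2)| :=
    (measurable_wrap.comp (by fun_prop)).norm
  exact ((hnum.pow_const q).div (hden.pow_const q)).ennreal_ofReal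

theorem edist_rpow_le_sobKernel (hq : 0 < q) (hper : Function.Periodic f 1) (s t : ℝ) :
    edist (f s) (f t) ^ q ≤ ENNReal.ofReal (|s - t| ^ q) *
      ENNReal.ofReal (‖f s - f t‖ ^ q / |wrap (s - t)| ^ q) := by
  rw [edist_dist, dist_eq_norm, ENNReal.ofReal_rpow_of_nonneg (norm_nonneg _) hq.le,
    ← ENNReal.ofReal_mul (by positivity)]
  refine ENNReal.ofReal_le_ofReal ?_
  rcases eq_or_ne (wrap (s - t)) 0 with h0 | h0
  · have hst : f s = f t := by rw [← map_add_wrap_of_periodic hper s t, h0, add_zero]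
    simp [hst, Real.zero_rpow hq.ne']
  · have hpos : 0 < |wrap (s - t)| ^ q := by positivity
    rw [mul_div_assoc', le_div_iff₀ hpos, mul_comm]
    exact mul_le_mul_of_nonneg_right
      (Real.rpow_le_rpow (abs_nonneg _) (abs_wrap_le_abs _) hq.le) (by positivity)

theorem norm_sub_le_sobSemPow (hq : 2 < q) (hf : Continuous f) (hper : Function.Periodic f 1)
    (hfin : sobSemPow (1 - 1 / q) q f ≠ ⊤) {s t : ℝ} (hst : |s - t| ≤ 1) :
    ‖f s - f t‖ ≤ morreyConst q * (sobSemPow (1 - 1 / q) q f).toReal ^ (1 / q) *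
      |s - t| ^ (1 - 2 / q) := by
  rw [← dist_eq_norm]
  refine dist_le_of_kernel hf hq ENNReal.toReal_nonneg (fun t s => ?_) (fun s t => ?_)
    (edist_rpow_le_sobKernel (by linarith) hper) ?_ hst
  · simp only [hper s, add_sub_right_comm, periodic_wrap (s - t)]
  · simp only [hper t, ← sub_sub, periodic_wrap.sub_eq]
  · rw [ENNReal.ofReal_toReal hfin, sobSemPow_eq (by linarith),
      setLIntegral_unitSq_eq (measurable_sobKernel q hf)]

theorem sobSemPow_toReal_rpow_le_Wnorm (s q : ℝ) (f : ℝ → EuclideanSpace ℝ (Fin n)) :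
    (sobSemPow s q f).toReal ^ (1 / q) ≤ Wnorm s q f :=
  le_add_of_nonneg_left
    (Real.rpow_nonneg (integral_nonneg fun x => Real.rpow_nonneg (norm_nonneg (f x)) q) _)

theorem Wnorm_nonneg (s q : ℝ) (f : ℝ → EuclideanSpace ℝ (Fin n)) : 0 ≤ Wnorm s q f :=
  (Real.rpow_nonneg ENNReal.toReal_nonneg _).trans (sobSemPow_toReal_rpow_le_Wnorm s q f)

theorem integral_norm_le_rpow_integral (hq : 1 ≤ q) (hf : Continuous f) :
    ∫ x in Ioc (0 : ℝ) 1, ‖f x‖ ≤ (∫ x in Ioc (0 : ℝ) 1, ‖f x‖ ^ q) ^ (1 / q) := by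
  have hq0 : 0 < q := one_pos.trans_le hq
  rw [one_div, Real.le_rpow_inv_iff_of_pos (by positivity)
    (integral_nonneg fun x => by positivity) hq0]
  refine (convexOn_rpow hq).map_integral_le (f := fun x => ‖f x‖) (g := fun x => x ^ q)
    (continuousOn_id.rpow_const fun _ _ => Or.inr hq0.le) isClosed_Ici
    (Eventually.of_forall fun x => norm_nonneg (f x)) ?_
    (hf.norm.rpow_const fun _ => Or.inr hq0.le).integrableOn_Ioc
  exact hf.norm.integrableOn_Ioc

theorem norm_le_Wnorm (hq : 2 < q) (hf : Continuous f) (hper : Function.Periodic f 1)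
    (hfin : sobSemPow (1 - 1 / q) q f ≠ ⊤) (a : ℝ) :
    ‖f a‖ ≤ (1 + morreyConst q) * Wnorm (1 - 1 / q) q f := by
  wlog ha : a ∈ Ico (0 : ℝ) 1 generalizing a
  · have hfract : f (Int.fract a) = f a := by
      simpa only [Int.fract, mul_one] using hper.sub_int_mul_eq ⌊a⌋
    rw [← hfract]
    exact this _ ⟨Int.fract_nonneg a, Int.fract_lt_one a⟩
  set S := (sobSemPow (1 - 1 / q) q f).toReal ^ (1 / q)
  have hα := one_sub_two_div_pos hq
  have hC := morreyConst_pos hq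
  have hS : 0 ≤ S := Real.rpow_nonneg ENNReal.toReal_nonneg _
  have hpoint (x : ℝ) (hx : x ∈ Ioc (0 : ℝ) 1) : ‖f a‖ ≤ ‖f x‖ + morreyConst q * S := by
    have hax : |a - x| ≤ 1 := abs_le.2 ⟨by linarith [hx.2, ha.1], by linarith [hx.1, ha.2]⟩
    have hosc : ‖f a - f x‖ ≤ morreyConst q * S :=
      (norm_sub_le_sobSemPow hq hf hper hfin hax).trans
        (mul_le_of_le_one_right (by positivity) (Real.rpow_le_one (abs_nonneg _) hax hα.le))
    linarith [norm_le_norm_add_norm_sub (f x) (f a), norm_sub_rev (f x) (f a)]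
  have hint : IntegrableOn (fun x => ‖f x‖) (Ioc 0 1) := hf.norm.integrableOn_Ioc
  have hmean : ‖f a‖ ≤ (∫ x in Ioc (0 : ℝ) 1, ‖f x‖) + morreyConst q * S := by
    have h := setIntegral_mono_on (μ := volume) (integrable_const ‖f a‖)
      (hint.add (integrable_const (morreyConst q * S))) measurableSet_Ioc hpoint
    rw [integral_add' hint (integrable_const _)] at h
    simpa using h
  have hL : (∫ x in Ioc (0 : ℝ) 1, ‖f x‖) + S ≤ Wnorm (1 - 1 / q) q f :=
    add_le_add_left (integral_norm_le_rpow_integral (by linarith) hf) S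
  have hSW := sobSemPow_toReal_rpow_le_Wnorm (1 - 1 / q) q f
  nlinarith

theorem le_Wnorm_of_le_norm {c : ℝ} (hq : 1 ≤ q) (s : ℝ) (hf : Continuous f)
    (hle : ∀ x, c ≤ ‖f x‖) : c ≤ Wnorm s q f := by
  have hint : IntegrableOn (fun x => ‖f x‖) (Ioc 0 1) := hf.norm.integrableOn_Ioc
  calc c = ∫ _ in Ioc (0 : ℝ) 1, c := by simp
    _ ≤ ∫ x in Ioc (0 : ℝ) 1, ‖f x‖ := integral_mono (integrable_const c) hint hle
    _ ≤ (∫ x in Ioc (0 : ℝ) 1, ‖f x‖ ^ q) ^ (1 / q) := integral_norm_le_rpow_integral hq hf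
    _ ≤ Wnorm s q f := le_add_of_nonneg_right (Real.rpow_nonneg ENNReal.toReal_nonneg _)

end Sobolev

/-! ### Lines through the origin and the wedge norm -/

section Wedge

variable {n : ℕ}

theorem wedgeSq_nonneg (a b : EuclideanSpace ℝ (Fin n)) : 0 ≤ wedgeSq a b := by
  have h := real_inner_mul_inner_self_le a b
  rw [real_inner_self_eq_norm_sq, real_inner_self_eq_norm_sq, ← sq] at h
  exact sub_nonneg.2 h

theorem wedgeSq_le (a b : EuclideanSpace ℝ (Fin n)) : wedgeSq a b ≤ (‖a‖ * ‖b‖) ^ 2 := by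
  rw [wedgeSq, mul_pow]
  exact sub_le_self _ (sq_nonneg _)

theorem continuous_wedgeSq_comp {X : Type*} [TopologicalSpace X]
    {f g : X → EuclideanSpace ℝ (Fin n)} (hf : Continuous f) (hg : Continuous g) :
    Continuous fun x => wedgeSq (f x) (g x) := by
  unfold wedgeSq
  fun_prop

/-- The pointwise tangent-point density of a chord `b` against a tangent vector `a`: up to the
factor `‖a‖ ^ q`, the `q`-th power of half the curvature of the circle through the endpoints of `b`
that is tangent to `a` at one of them. -/
def tpRatio (q : ℝ) (a b : EuclideanSpace ℝ (Fin n)) : ℝ :=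
  wedgeSq a b ^ (q / 2) / ‖b‖ ^ (2 * q)

theorem tpRatio_nonneg (q : ℝ) (a b : EuclideanSpace ℝ (Fin n)) : 0 ≤ tpRatio q a b := by
  have := wedgeSq_nonneg a b
  unfold tpRatio
  positivity

theorem wedgeSq_ge_of_near_transversal {a b c : EuclideanSpace ℝ (Fin n)}
    (hac : |⟪a, c⟫| ≤ ‖a‖ * ‖c‖ / 2) (hbc : ‖b - c‖ ≤ ‖c‖ / 8) :
    (‖a‖ * ‖c‖ / 4) ^ 2 ≤ wedgeSq a b := by
  have hinner : |⟪a, b⟫| ≤ 5 / 8 * (‖a‖ * ‖c‖) := by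
    have hsplit : ⟪a, b⟫ = ⟪a, c⟫ + ⟪a, b - c⟫ := by rw [← inner_add_right, add_sub_cancel]
    have herr : |⟪a, b - c⟫| ≤ ‖a‖ * (‖c‖ / 8) := (abs_real_inner_le_norm _ _).trans (by gcongr)
    rw [hsplit]
    linarith [abs_add_le ⟪a, c⟫ ⟪a, b - c⟫]
  have hnorm : 7 / 8 * ‖c‖ ≤ ‖b‖ := by linarith [norm_sub_norm_le c b, norm_sub_rev c b]
  have hinner_sq : ⟪a, b⟫ ^ 2 ≤ (5 / 8 * (‖a‖ * ‖c‖)) ^ 2 := by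
    rw [← sq_abs]
    gcongr
  have hnorm_sq : (‖a‖ * (7 / 8 * ‖c‖)) ^ 2 ≤ (‖a‖ * ‖b‖) ^ 2 := by gcongr
  rw [wedgeSq]
  linarith [sq_nonneg (‖a‖ * ‖c‖)]

theorem tpRatio_ge_of_near_transversal {q : ℝ} (hq : 0 ≤ q) {a b c : EuclideanSpace ℝ (Fin n)}
    (hc : c ≠ 0) (hac : |⟪a, c⟫| ≤ ‖a‖ * ‖c‖ / 2) (hbc : ‖b - c‖ ≤ ‖c‖ / 8) :
    (‖a‖ / (16 * ‖c‖)) ^ q ≤ tpRatio q a b := by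
  have hc0 : 0 < ‖c‖ := norm_pos_iff.2 hc
  have hb0 : 0 < ‖b‖ := by linarith [norm_sub_norm_le c b, norm_sub_rev c b]
  have hb2 : ‖b‖ ≤ 2 * ‖c‖ := by linarith [norm_sub_norm_le b c]
  calc (‖a‖ / (16 * ‖c‖)) ^ q = ((‖a‖ * ‖c‖ / 4) ^ 2) ^ (q / 2) / (2 * ‖c‖) ^ (2 * q) := by
        rw [← Real.rpow_two (_ / 4), ← Real.rpow_mul (by positivity), mul_div_cancel₀ q two_ne_zero,
          Real.rpow_mul (by positivity) 2 q, Real.rpow_two,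
          ← Real.div_rpow (by positivity) (by positivity)]
        congr 1
        field_simp
        ring
    _ ≤ tpRatio q a b := by
        unfold tpRatio
        gcongr
        · exact Real.rpow_nonneg (wedgeSq_nonneg a b) _
        · exact wedgeSq_ge_of_near_transversal hac hbc

end Wedge

section LineProj

variable {E : Type*} [NormedAddCommGroup E] [InnerProductSpace ℝ E]

/-- The orthogonal projection onto the line spanned by `v`; the operator norm of a difference of
two such projections serves as the distance between the lines. -/
def lineProj (v : E) : E →L[ℝ] E := (Submodule.span ℝ {v}).starProjection

theorem lineProj_apply (v w : E) : lineProj v w = (⟪v, w⟫ / ‖v‖ ^ 2) • v :=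
  Submodule.starProjection_singleton ℝ w

theorem lineProj_neg (v : E) : lineProj (-v) = lineProj v := by
  ext w
  simp only [lineProj_apply, inner_neg_left, norm_neg, smul_neg, neg_div, neg_smul, neg_neg]

theorem lineProj_eq_rankOne (v : E) :
    lineProj v = InnerProductSpace.rankOne ℝ (‖v‖⁻¹ • v) (‖v‖⁻¹ • v) := by
  ext w
  rw [lineProj_apply, InnerProductSpace.rankOne_apply, real_inner_smul_left, smul_smul]
  congr 1
  ring

theorem continuous_lineProj_comp {X : Type*} [TopologicalSpace X] {f : X → E} (hf : Continuous f)
    (h0 : ∀ x, f x ≠ 0) : Continuous fun x => lineProj (f x) := by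
  have h : Continuous fun x => ‖f x‖⁻¹ • f x :=
    (hf.norm.inv₀ fun x => norm_ne_zero_iff.2 (h0 x)).smul hf
  simp only [lineProj_eq_rankOne]
  exact ((InnerProductSpace.rankOne ℝ).continuous.comp h).clm_apply h

theorem norm_sub_inner_smul {T e : E} (hT : ‖T‖ = 1) (he : ‖e‖ = 1) :
    ‖T - ⟪T, e⟫ • e‖ = √(1 - ⟪T, e⟫ ^ 2) := by
  rw [← Real.sqrt_sq (norm_nonneg (T - ⟪T, e⟫ • e)), norm_sub_sq_real, inner_smul_right, norm_smul,
    hT, he, Real.norm_eq_abs, mul_one, sq_abs]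
  ring_nf

theorem norm_rankOne_self_sub_le {T e : E} (hT : ‖T‖ = 1) (he : ‖e‖ = 1) :
    ‖InnerProductSpace.rankOne ℝ T T - InnerProductSpace.rankOne ℝ e e‖ ≤
      2 * √(1 - ⟪T, e⟫ ^ 2) := by
  have hsplit : InnerProductSpace.rankOne ℝ T T - InnerProductSpace.rankOne ℝ e e =
      InnerProductSpace.rankOne ℝ T (T - ⟪T, e⟫ • e) -
        InnerProductSpace.rankOne ℝ (e - ⟪e, T⟫ • T) e := by
    ext x
    simp only [sub_apply, InnerProductSpace.rankOne_apply, inner_sub_left, real_inner_smul_left,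
      real_inner_comm e T]
    module
  rw [hsplit]
  refine (norm_sub_le _ _).trans_eq ?_
  rw [InnerProductSpace.norm_rankOne, InnerProductSpace.norm_rankOne, hT, he,
    norm_sub_inner_smul hT he, norm_sub_inner_smul he hT, real_inner_comm]
  ring

theorem inner_lineProj_self (a b : E) : ⟪lineProj a b, b⟫ = ⟪a, b⟫ ^ 2 / ‖a‖ ^ 2 := by
  rw [lineProj_apply, real_inner_smul_left]
  ring

theorem inner_sq_div_sub_le (a c b : E) :
    ⟪a, b⟫ ^ 2 / ‖a‖ ^ 2 - ⟪c, b⟫ ^ 2 / ‖c‖ ^ 2 ≤ ‖lineProj a - lineProj c‖ * ‖b‖ ^ 2 := by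
  rw [← inner_lineProj_self, ← inner_lineProj_self, ← inner_sub_left, ← sub_apply, sq, ← mul_assoc]
  refine (real_inner_le_norm _ _).trans ?_
  gcongr
  exact (lineProj a - lineProj c).le_opNorm b

theorem abs_inner_le_of_lineProj_near {a c b : E} (hac : ‖lineProj a - lineProj c‖ ≤ 1 / 4)
    (hcb : ⟪c, b⟫ = 0) : |⟪a, b⟫| ≤ ‖a‖ * ‖b‖ / 2 := by
  rcases eq_or_ne a 0 with rfl | ha
  · simp
  have h : ⟪a, b⟫ ^ 2 / ‖a‖ ^ 2 ≤ 1 / 4 * ‖b‖ ^ 2 := by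
    calc ⟪a, b⟫ ^ 2 / ‖a‖ ^ 2 ≤ ‖lineProj a - lineProj c‖ * ‖b‖ ^ 2 := by
          simpa [hcb] using inner_sq_div_sub_le a c b
      _ ≤ _ := by gcongr
  rw [div_le_iff₀ (by positivity)] at h
  exact abs_le_of_sq_le_sq (by linarith) (by positivity)

theorem norm_mul_norm_div_two_le_abs_inner {a c : E} (hac : ‖lineProj a - lineProj c‖ ≤ 1 / 4) :
    ‖a‖ * ‖c‖ / 2 ≤ |⟪c, a⟫| := by
  rcases eq_or_ne a 0 with rfl | ha
  · simp
  rcases eq_or_ne c 0 with rfl | hc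
  · simp
  have ha0 : 0 < ‖a‖ := norm_pos_iff.2 ha
  have hc0 : 0 < ‖c‖ := norm_pos_iff.2 hc
  have h : 3 / 4 * ‖a‖ ^ 2 ≤ ⟪c, a⟫ ^ 2 / ‖c‖ ^ 2 := by
    have h₁ := inner_sq_div_sub_le a c a
    have h₂ : ‖lineProj a - lineProj c‖ * ‖a‖ ^ 2 ≤ 1 / 4 * ‖a‖ ^ 2 := by gcongr
    have h₃ : ⟪a, a⟫ ^ 2 / ‖a‖ ^ 2 = ‖a‖ ^ 2 := by rw [real_inner_self_eq_norm_sq]; field_simp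
    linarith
  rw [le_div_iff₀ (by positivity)] at h
  refine abs_le_of_sq_le_sq' ?_ (abs_nonneg _) |>.2
  rw [sq_abs]
  nlinarith [mul_pos ha0 hc0]

theorem norm_mul_norm_div_two_le_inner_of_continuousOn {g : ℝ → E} {a b : ℝ}
    (hg : ContinuousOn g (Icc a b)) (h0 : ∀ s ∈ Icc a b, g s ≠ 0)
    (hosc : ∀ s ∈ Icc a b, ‖lineProj (g a) - lineProj (g s)‖ ≤ 1 / 4) {s : ℝ} (hs : s ∈ Icc a b) :
    ‖g a‖ * ‖g s‖ / 2 ≤ ⟪g s, g a⟫ := by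
  have ha : a ∈ Icc a b := ⟨le_rfl, hs.1.trans hs.2⟩
  have habs (t : ℝ) (ht : t ∈ Icc a b) : 0 < |⟪g t, g a⟫| := by
    have := norm_pos_iff.2 (h0 a ha)
    have := norm_pos_iff.2 (h0 t ht)
    exact (by positivity : 0 < ‖g a‖ * ‖g t‖ / 2).trans_le
      (norm_mul_norm_div_two_le_abs_inner (hosc t ht))
  have hpos : 0 < ⟪g s, g a⟫ := by
    by_contra! hneg
    have hcont : ContinuousOn (fun t => ⟪g t, g a⟫) (Icc a s) :=
      (hg.mono (Icc_subset_Icc_right hs.2)).inner continuousOn_const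
    obtain ⟨t, ht, ht0⟩ := intermediate_value_Icc' hs.1 hcont ⟨hneg, real_inner_self_nonneg⟩
    exact (habs t ⟨ht.1, ht.2.trans hs.2⟩).ne' (abs_eq_zero.2 ht0)
  rw [← abs_of_pos hpos]
  exact norm_mul_norm_div_two_le_abs_inner (hosc s hs)

theorem mul_sub_le_norm_sub_of_lineProj_near {u : ℝ → E} {lam a b : ℝ} (hu : ContDiff ℝ 1 u)
    (hlam : 0 < lam) (hlow : ∀ x, lam ≤ ‖deriv u x‖) (hab : a ≤ b)
    (hosc : ∀ s ∈ Icc a b, ‖lineProj (deriv u a) - lineProj (deriv u s)‖ ≤ 1 / 4) :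
    lam / 2 * (b - a) ≤ ‖u b - u a‖ := by
  have hspeed (s : ℝ) : 0 < ‖deriv u s‖ := hlam.trans_le (hlow s)
  have hslope (s : ℝ) (hs : s ∈ Icc a b) : lam / 2 * ‖deriv u a‖ ≤ ⟪deriv u s, deriv u a⟫ := by
    have h := norm_mul_norm_div_two_le_inner_of_continuousOn
      (hu.continuous_deriv le_rfl).continuousOn (fun s _ => norm_pos_iff.1 (hspeed s)) hosc hs
    nlinarith [hlow s, hspeed a]
  have hderiv (s : ℝ) :
      HasDerivAt (fun s => ⟪u s, deriv u a⟫) ⟪deriv u s, deriv u a⟫ s := by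
    simpa using ((hu.differentiable one_ne_zero) s).hasDerivAt.inner ℝ (hasDerivAt_const s _)
  have hmean := (convex_Icc a b).mul_sub_le_image_sub_of_le_deriv
    (fun s _ => (hderiv s).continuousAt.continuousWithinAt)
    (fun s _ => (hderiv s).differentiableAt.differentiableWithinAt)
    (fun s hs => by rw [(hderiv s).deriv]; exact hslope s (interior_subset hs))
    a (left_mem_Icc.2 hab) b (right_mem_Icc.2 hab) hab
  rw [← inner_sub_left] at hmean
  refine le_of_mul_le_mul_right ?_ (hspeed a)
  linarith [real_inner_le_norm (u b - u a) (deriv u a)]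

end LineProj

section TangentLine

variable {n : ℕ} {q : ℝ} {a b : EuclideanSpace ℝ (Fin n)}

theorem norm_lineProj_sub_le (ha : a ≠ 0) (hb : b ≠ 0) :
    ‖lineProj a - lineProj b‖ ≤ 2 * (√(wedgeSq a b) / (‖a‖ * ‖b‖)) := by
  have ha' : 0 < ‖a‖ := norm_pos_iff.2 ha
  have hb' : 0 < ‖b‖ := norm_pos_iff.2 hb
  have hsin : 1 - ⟪‖a‖⁻¹ • a, ‖b‖⁻¹ • b⟫ ^ 2 = wedgeSq a b / (‖a‖ * ‖b‖) ^ 2 := by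
    rw [wedgeSq, real_inner_smul_left, real_inner_smul_right]
    field_simp
  rw [lineProj_eq_rankOne, lineProj_eq_rankOne, ← Real.sqrt_sq (by positivity : 0 ≤ ‖a‖ * ‖b‖),
    ← Real.sqrt_div (wedgeSq_nonneg a b), ← hsin]
  exact norm_rankOne_self_sub_le (by simp [norm_smul, ha'.ne']) (by simp [norm_smul, hb'.ne'])

theorem norm_lineProj_sub_rpow_le (hq : 0 ≤ q) (ha : a ≠ 0) (hb : b ≠ 0) :
    ‖lineProj a - lineProj b‖ ^ q ≤ (2 * ‖b‖ / ‖a‖) ^ q * tpRatio q a b := by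
  have hb' : 0 < ‖b‖ := norm_pos_iff.2 hb
  have hratio : tpRatio q a b = (√(wedgeSq a b) / ‖b‖ ^ 2) ^ q := by
    rw [tpRatio, Real.div_rpow (by positivity) (by positivity), Real.sqrt_eq_rpow,
      ← Real.rpow_mul (wedgeSq_nonneg a b), Real.rpow_mul hb'.le, Real.rpow_two, one_div_mul_eq_div]
  rw [hratio, ← Real.mul_rpow (by positivity) (by positivity)]
  gcongr
  refine (norm_lineProj_sub_le ha hb).trans_eq ?_
  field_simp

end TangentLine

/-! ### Loops and the Hölder continuity of their tangent lines -/

section Loops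

variable {F : Type*} [NormedAddCommGroup F] [NormedSpace ℝ F] {κ L ω : ℝ} {u w : ℝ → F}

theorem periodic_deriv (hu : Function.Periodic u 1) : Function.Periodic (deriv u) 1 := fun x => by
  rw [← deriv_comp_add_const, show (fun y => u (y + 1)) = u from funext hu]

/-- `C¹` maps `ℝ/ℤ → F`, encoded as `1`-periodic maps on `ℝ`, with derivative bounded by `L`. -/
structure LipLoop (L : ℝ) (u : ℝ → F) : Prop where
  contDiff : ContDiff ℝ 1 u
  periodic : Function.Periodic u 1
  norm_deriv_le : ∀ x, ‖deriv u x‖ ≤ L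

/-- `C¹` loops with derivative bounded by `L` that are bi-Lipschitz with lower constant `κ` for the
circle distance `|wrap (x - y)|`. -/
structure BilipLoop (κ L : ℝ) (u : ℝ → F) : Prop extends LipLoop L u where
  mul_abs_wrap_le : ∀ x y, κ * |wrap (x - y)| ≤ ‖u x - u y‖

namespace LipLoop

theorem continuous_deriv (hu : LipLoop L u) : Continuous (deriv u) :=
  hu.contDiff.continuous_deriv le_rfl

theorem hasDerivAt (hu : LipLoop L u) (x : ℝ) : HasDerivAt u (deriv u x) x :=
  (hu.contDiff.differentiable one_ne_zero x).hasDerivAt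

theorem nonneg (hu : LipLoop L u) : 0 ≤ L := (norm_nonneg _).trans (hu.norm_deriv_le 0)

theorem norm_sub_le (hu : LipLoop L u) (s t : ℝ) : ‖u s - u t‖ ≤ L * |s - t| :=
  convex_univ.norm_image_sub_le_of_norm_deriv_le (fun x _ => (hu.hasDerivAt x).differentiableAt)
    (fun x _ => hu.norm_deriv_le x) (mem_univ t) (mem_univ s)

theorem norm_sub_le_wrap (hu : LipLoop L u) (x y : ℝ) : ‖u x - u y‖ ≤ L * |wrap (x - y)| := by
  simpa [map_add_wrap_of_periodic hu.periodic] using hu.norm_sub_le (y + wrap (x - y)) y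

theorem deriv_add_smul (hu : LipLoop L u) (hw : LipLoop ω w) (t x : ℝ) :
    deriv (fun x => u x + t • w x) x = deriv u x + t • deriv w x :=
  ((hu.hasDerivAt x).add ((hw.hasDerivAt x).const_smul t)).deriv

theorem add_smul (hu : LipLoop L u) (hw : LipLoop ω w) (t : ℝ) :
    LipLoop (L + |t| * ω) fun x => u x + t • w x where
  contDiff := hu.contDiff.add (hw.contDiff.const_smul t)
  periodic x := by simp only [hu.periodic x, hw.periodic x]
  norm_deriv_le x := by
    rw [hu.deriv_add_smul hw]
    refine (norm_add_le _ _).trans (add_le_add (hu.norm_deriv_le x) ?_)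
    rw [norm_smul, Real.norm_eq_abs]
    gcongr
    exact hw.norm_deriv_le x

end LipLoop

theorem BilipLoop.mono {κ' L' : ℝ} (hu : BilipLoop κ L u) (hκ : κ' ≤ κ) (hL : L ≤ L') :
    BilipLoop κ' L' u where
  toLipLoop := ⟨hu.contDiff, hu.periodic, fun x => (hu.norm_deriv_le x).trans hL⟩
  mul_abs_wrap_le x y := by
    refine le_trans ?_ (hu.mul_abs_wrap_le x y)
    gcongr

theorem BilipLoop.add_smul (hu : BilipLoop κ L u) (hw : LipLoop ω w) (t : ℝ) :
    BilipLoop (κ - |t| * ω) (L + |t| * ω) fun x => u x + t • w x where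
  toLipLoop := hu.toLipLoop.add_smul hw t
  mul_abs_wrap_le x y := by
    have hpert : ‖t • (w x - w y)‖ ≤ |t| * (ω * |wrap (x - y)|) := by
      rw [norm_smul, Real.norm_eq_abs]
      gcongr
      exact hw.norm_sub_le_wrap x y
    have hsplit : u x + t • w x - (u y + t • w y) = u x - u y + t • (w x - w y) := by module
    rw [hsplit]
    linarith [hu.mul_abs_wrap_le x y, norm_sub_le_norm_add (u x - u y) (t • (w x - w y))]

end Loops

section TangentPointKernel

variable {n : ℕ} {u : ℝ → EuclideanSpace ℝ (Fin n)}

/-- The integrand of the tangent-point functional. -/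
def tpKernel (q : ℝ) (u : ℝ → EuclideanSpace ℝ (Fin n)) (x y : ℝ) : ℝ :=
  tpRatio q (deriv u y) (u x - u y)

theorem tpKernel_nonneg (q : ℝ) (u : ℝ → EuclideanSpace ℝ (Fin n)) (x y : ℝ) :
    0 ≤ tpKernel q u x y :=
  tpRatio_nonneg _ _ _

theorem measurable_tpKernel (q : ℝ) (hu : ContDiff ℝ 1 u) :
    Measurable fun p : ℝ × ℝ => tpKernel q u p.1 p.2 := by
  have hcont := hu.continuous
  have hwedge : Continuous fun p : ℝ × ℝ => wedgeSq (deriv u p.2) (u p.1 - u p.2) :=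
    continuous_wedgeSq_comp (by fun_prop) (by fun_prop)
  have hchord : Continuous fun p : ℝ × ℝ => ‖u p.1 - u p.2‖ := by fun_prop
  unfold tpKernel tpRatio
  exact (hwedge.measurable.pow_const _).div (hchord.measurable.pow_const _)

theorem periodic_tpKernel_left (q : ℝ) (hu : Function.Periodic u 1) (y : ℝ) :
    Function.Periodic (fun x => tpKernel q u x y) 1 := fun x => by
  simp only [tpKernel, hu x]

theorem periodic_tpKernel_right (q : ℝ) (hu : Function.Periodic u 1) (x : ℝ) :
    Function.Periodic (tpKernel q u x) 1 := fun y => by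
  simp only [tpKernel, hu y, periodic_deriv hu y]

theorem TPe_eq (q : ℝ) (u : ℝ → EuclideanSpace ℝ (Fin n)) :
    TPe q u = ENNReal.ofReal (1 / q) *
      ∫⁻ p in unitSq, ENNReal.ofReal (tpKernel q u p.1 p.2) := rfl

theorem setLIntegral_tpKernel_le {q M : ℝ} (hq : 0 < q) (hTP : TPe q u ≤ ENNReal.ofReal M) :
    ∫⁻ p in unitSq, ENNReal.ofReal (tpKernel q u p.1 p.2) ≤ ENNReal.ofReal (q * M) := by
  calc ∫⁻ p in unitSq, ENNReal.ofReal (tpKernel q u p.1 p.2)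
      = ENNReal.ofReal q * TPe q u := by
        rw [TPe_eq, ← mul_assoc, ← ENNReal.ofReal_mul hq.le, mul_one_div_cancel hq.ne',
          ENNReal.ofReal_one, one_mul]
    _ ≤ ENNReal.ofReal (q * M) := by
        rw [ENNReal.ofReal_mul hq.le]
        gcongr

end TangentPointKernel

/-- Embedded `C¹` loops with speed between `lam` and `Λ`. -/
structure AdmissibleCurve {n : ℕ} (lam Λ : ℝ) (u : ℝ → EuclideanSpace ℝ (Fin n)) : Prop
    extends LipLoop Λ u where
  embedded : Embedded u
  le_norm_deriv : ∀ x, lam ≤ ‖deriv u x‖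

/-- The Hölder constant of the tangent lines of curves with speed between `lam` and `Λ` and
tangent-point energy at most `M`. -/
def tangentLineConst (q lam Λ M : ℝ) : ℝ :=
  morreyConst q * (2 ^ (q - 1) * (2 * Λ / lam) ^ q * (q * M + q * M)) ^ (1 / q)

theorem tangentLineConst_pos {q lam Λ M : ℝ} (hq : 2 < q) (hlam : 0 < lam) (hΛ : 0 < Λ)
    (hM : 0 < M) : 0 < tangentLineConst q lam Λ M := by
  have := morreyConst_pos hq
  have : 0 < q := by linarith
  unfold tangentLineConst
  positivity

namespace AdmissibleCurve

variable {n : ℕ} {q lam Λ M : ℝ} {u : ℝ → EuclideanSpace ℝ (Fin n)}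

theorem exists_intCast_eq_sub (hu : AdmissibleCurve lam Λ u) {s t : ℝ} (hst : u s = u t) :
    ∃ k : ℤ, (k : ℝ) = s - t := by
  have h : ((s - t : ℝ) : AddCircle (1 : ℝ)) = 0 := by
    rw [AddCircle.coe_sub, hu.embedded s t hst, sub_self]
  simpa using (AddCircle.coe_eq_zero_iff 1).1 h

theorem deriv_eq_of_eq (hu : AdmissibleCurve lam Λ u) {s t : ℝ} (hst : u s = u t) :
    deriv u s = deriv u t := by
  obtain ⟨k, hk⟩ := hu.exists_intCast_eq_sub hst
  rw [show s = t + k * 1 by linarith]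
  exact (periodic_deriv hu.periodic).int_mul k t

theorem edist_lineProj_chord_rpow_le (hu : AdmissibleCurve lam Λ u) (hlam : 0 < lam) (hq : 0 ≤ q)
    {s t : ℝ} (hst : u s ≠ u t) :
    edist (lineProj (deriv u t)) (lineProj (u s - u t)) ^ q ≤
      ENNReal.ofReal (|s - t| ^ q) * ENNReal.ofReal ((2 * Λ / lam) ^ q) *
        ENNReal.ofReal (tpKernel q u s t) := by
  have hΛ := hu.nonneg
  have hspeed : 0 < ‖deriv u t‖ := hlam.trans_le (hu.le_norm_deriv t)
  have hker : 0 ≤ tpKernel q u s t := tpKernel_nonneg q u s t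
  rw [edist_dist, dist_eq_norm, ENNReal.ofReal_rpow_of_nonneg (norm_nonneg _) hq,
    ← ENNReal.ofReal_mul (by positivity), ← ENNReal.ofReal_mul (by positivity),
    ← Real.mul_rpow (abs_nonneg _) (by positivity)]
  refine ENNReal.ofReal_le_ofReal ?_
  refine (norm_lineProj_sub_rpow_le hq (norm_pos_iff.1 hspeed) (sub_ne_zero.2 hst)).trans ?_
  change _ * tpKernel q u s t ≤ _
  gcongr
  calc 2 * ‖u s - u t‖ / ‖deriv u t‖ ≤ 2 * (Λ * |s - t|) / lam := by
        gcongr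
        · exact hu.norm_sub_le s t
        · exact hu.le_norm_deriv t
    _ = |s - t| * (2 * Λ / lam) := by ring

/-- Both tangent lines make a small angle with the chord. -/
theorem edist_lineProj_deriv_rpow_le (hu : AdmissibleCurve lam Λ u) (hlam : 0 < lam) (hq : 1 ≤ q)
    (s t : ℝ) : edist (lineProj (deriv u s)) (lineProj (deriv u t)) ^ q ≤
      ENNReal.ofReal (|s - t| ^ q) * (ENNReal.ofReal (2 ^ (q - 1) * (2 * Λ / lam) ^ q) *
        (ENNReal.ofReal (tpKernel q u s t) + ENNReal.ofReal (tpKernel q u t s))) := by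
  have hq0 : 0 < q := one_pos.trans_le hq
  by_cases hst : u s = u t
  · rw [hu.deriv_eq_of_eq hst, edist_self, ENNReal.zero_rpow_of_pos hq0]
    exact zero_le
  have hts := hu.edist_lineProj_chord_rpow_le hlam hq0.le (Ne.symm hst)
  rw [← neg_sub (u s), lineProj_neg, abs_sub_comm] at hts
  calc edist (lineProj (deriv u s)) (lineProj (deriv u t)) ^ q
      ≤ (edist (lineProj (deriv u s)) (lineProj (u s - u t)) +
          edist (lineProj (deriv u t)) (lineProj (u s - u t))) ^ q := by
        gcongr
        exact edist_triangle_right _ _ _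
    _ ≤ 2 ^ (q - 1) * (edist (lineProj (deriv u s)) (lineProj (u s - u t)) ^ q +
          edist (lineProj (deriv u t)) (lineProj (u s - u t)) ^ q) :=
        ENNReal.rpow_add_le_mul_rpow_add_rpow _ _ hq
    _ ≤ 2 ^ (q - 1) * (ENNReal.ofReal (|s - t| ^ q) * ENNReal.ofReal ((2 * Λ / lam) ^ q) *
            ENNReal.ofReal (tpKernel q u t s) +
          ENNReal.ofReal (|s - t| ^ q) * ENNReal.ofReal ((2 * Λ / lam) ^ q) *
            ENNReal.ofReal (tpKernel q u s t)) := by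
        gcongr
        exact hu.edist_lineProj_chord_rpow_le hlam hq0.le hst
    _ = _ := by
        rw [ENNReal.ofReal_mul (by positivity), ← ENNReal.ofReal_rpow_of_pos two_pos,
          ENNReal.ofReal_ofNat]
        ring

theorem norm_lineProj_deriv_sub_le (hu : AdmissibleCurve lam Λ u) (hlam : 0 < lam) (hq : 2 < q)
    (hM : 0 ≤ M) (hTP : TPe q u ≤ ENNReal.ofReal M) {s t : ℝ} (hst : |s - t| ≤ 1) :
    ‖lineProj (deriv u s) - lineProj (deriv u t)‖ ≤
      tangentLineConst q lam Λ M * |s - t| ^ (1 - 2 / q) := by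
  have hq0 : 0 < q := by linarith
  have hΛ := hu.nonneg
  have hmeas := (measurable_tpKernel q hu.contDiff).ennreal_ofReal
  have henergy := setLIntegral_tpKernel_le hq0 hTP
  have hswap := (setLIntegral_unitSq_comp_swap _).trans_le henergy
  rw [← dist_eq_norm]
  refine dist_le_of_kernel (continuous_lineProj_comp hu.continuous_deriv fun x =>
    norm_pos_iff.1 (hlam.trans_le (hu.le_norm_deriv x))) hq (by positivity) (fun t s => ?_)
    (fun s t => ?_) (hu.edist_lineProj_deriv_rpow_le hlam (by linarith)) ?_ hst
  · simp only [periodic_tpKernel_left q hu.periodic t s, periodic_tpKernel_right q hu.periodic t s]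
  · simp only [periodic_tpKernel_left q hu.periodic s t, periodic_tpKernel_right q hu.periodic s t]
  · rw [← setLIntegral_unitSq_eq (F := fun p => ENNReal.ofReal (2 ^ (q - 1) * (2 * Λ / lam) ^ q) *
        (ENNReal.ofReal (tpKernel q u p.1 p.2) + ENNReal.ofReal (tpKernel q u p.2 p.1)))
        ((hmeas.add (hmeas.comp measurable_swap)).const_mul _),
      lintegral_const_mul' _ _ ENNReal.ofReal_ne_top, lintegral_add_left hmeas,
      ENNReal.ofReal_mul (q := q * M + q * M) (by positivity),
        ENNReal.ofReal_add (by positivity) (by positivity)]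
    gcongr
    exact hswap

end AdmissibleCurve

/-! ### The uniform bi-Lipschitz estimate -/

/-- The length, relative to the distance of two strands, of the parameter windows on which these
strands stay close to the endpoints of a critical chord and have nearly constant tangent lines. -/
def windowRatio (Λ δ : ℝ) : ℝ := min (δ / Λ) (1 / (16 * Λ))

theorem windowRatio_pos {Λ δ : ℝ} (hΛ : 0 < Λ) (hδ : 0 < δ) : 0 < windowRatio Λ δ :=
  lt_min (by positivity) (by positivity)

/-- Lower bound for the length of a chord that is perpendicular to the curve at one endpoint. -/
def criticalDist (q lam Λ M δ : ℝ) : ℝ :=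
  (windowRatio Λ δ ^ 2 * (lam / 16) ^ q / (q * M)) ^ (1 / (q - 2))

theorem criticalDist_pos {q lam Λ M δ : ℝ} (hq : 0 < q) (hlam : 0 < lam) (hΛ : 0 < Λ) (hM : 0 < M)
    (hδ : 0 < δ) : 0 < criticalDist q lam Λ M δ := by
  have := windowRatio_pos hΛ hδ
  unfold criticalDist
  positivity

theorem mul_sq_le_of_le_tpKernel {n : ℕ} {q M x y ρ m : ℝ} {u : ℝ → EuclideanSpace ℝ (Fin n)}
    (hu : ContDiff ℝ 1 u) (hper : Function.Periodic u 1) (hq : 0 < q) (hM : 0 ≤ M)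
    (hTP : TPe q u ≤ ENNReal.ofReal M) (hρ0 : 0 < ρ) (hρ1 : ρ ≤ 1)
    (hm : ∀ σ ∈ Ioc (0 : ℝ) 1, ∀ τ ∈ Ioc (0 : ℝ) 1, m ≤ tpKernel q u (x + ρ * σ) (y + ρ * τ)) :
    m * ρ ^ 2 ≤ q * M := by
  have henergy := setLIntegral_tpKernel_le hq hTP
  rw [setLIntegral_unitSq_eq (measurable_tpKernel q hu).ennreal_ofReal] at henergy
  have hρabs : |ρ| = ρ := abs_of_pos hρ0
  have hbound : ENNReal.ofReal m ≤ ENNReal.ofReal (ρ⁻¹ * (ρ⁻¹ * (q * M))) := by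
    calc ENNReal.ofReal m = ∫⁻ _ in Ioc (0 : ℝ) 1, ∫⁻ _ in Ioc (0 : ℝ) 1, ENNReal.ofReal m := by
          simp
      _ ≤ ∫⁻ σ in Ioc (0 : ℝ) 1, ∫⁻ τ in Ioc (0 : ℝ) 1,
            ENNReal.ofReal (tpKernel q u (x + ρ * σ) (y + ρ * τ)) :=
          setLIntegral_mono' measurableSet_Ioc fun σ hσ =>
            setLIntegral_mono' measurableSet_Ioc fun τ hτ => ENNReal.ofReal_le_ofReal (hm σ hσ τ hτ)
      _ ≤ ENNReal.ofReal |ρ|⁻¹ * (ENNReal.ofReal |ρ|⁻¹ *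
            ∫⁻ s in Ioc (0 : ℝ) 1, ∫⁻ t in Ioc (0 : ℝ) 1, ENNReal.ofReal (tpKernel q u s t)) :=
          lintegral_lintegral_comp_affine_le (K := fun s t => ENNReal.ofReal (tpKernel q u s t))
            (fun t => (periodic_tpKernel_left q hper t).comp ENNReal.ofReal)
            (fun s => (periodic_tpKernel_right q hper s).comp ENNReal.ofReal) x y hρ0.ne'
            (by rwa [hρabs]) hρ0.ne' (by rwa [hρabs])
      _ ≤ ENNReal.ofReal |ρ|⁻¹ * (ENNReal.ofReal |ρ|⁻¹ * ENNReal.ofReal (q * M)) := by gcongr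
      _ = _ := by
          rw [hρabs, ← ENNReal.ofReal_mul (by positivity), ← ENNReal.ofReal_mul (by positivity)]
  rw [ENNReal.ofReal_le_ofReal_iff (by positivity)] at hbound
  calc m * ρ ^ 2 ≤ ρ⁻¹ * (ρ⁻¹ * (q * M)) * ρ ^ 2 := by gcongr
    _ = q * M := by field_simp

namespace AdmissibleCurve

variable {n : ℕ} {q lam Λ M δ : ℝ} {u : ℝ → EuclideanSpace ℝ (Fin n)}

theorem mul_abs_sub_le_norm_sub (hu : AdmissibleCurve lam Λ u) (hlam : 0 < lam)
    (hosc : ∀ s t, |s - t| ≤ δ → ‖lineProj (deriv u s) - lineProj (deriv u t)‖ ≤ 1 / 4)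
    {s t : ℝ} (hst : |s - t| ≤ δ) : lam / 2 * |s - t| ≤ ‖u s - u t‖ := by
  wlog h : t ≤ s generalizing s t
  · rw [abs_sub_comm, norm_sub_rev]
    rw [abs_sub_comm] at hst
    exact this hst (le_of_not_ge h)
  rw [abs_of_nonneg (sub_nonneg.2 h)] at hst ⊢
  refine mul_sub_le_norm_sub_of_lineProj_near hu.contDiff hlam hu.le_norm_deriv h
    fun r hr => hosc _ _ ?_
  rw [abs_sub_comm, abs_of_nonneg (sub_nonneg.2 hr.1)]
  linarith [hr.2]

theorem le_tpKernel_of_window (hu : AdmissibleCurve lam Λ u) (hlam : 0 < lam) (hq : 0 ≤ q)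
    (hδ : 0 < δ)
    (hosc : ∀ s t, |s - t| ≤ δ → ‖lineProj (deriv u s) - lineProj (deriv u t)‖ ≤ 1 / 4)
    {x y s t : ℝ} (hne : u x ≠ u y) (hxy : |x - y| ≤ 1) (horth : ⟪deriv u y, u x - u y⟫ = 0)
    (hs : |s - x| ≤ windowRatio Λ δ * ‖u x - u y‖)
    (ht : |t - y| ≤ windowRatio Λ δ * ‖u x - u y‖) :
    (lam / (16 * ‖u x - u y‖)) ^ q ≤ tpKernel q u s t := by
  have hΛ : 0 < Λ := (hlam.trans_le (hu.le_norm_deriv 0)).trans_le (hu.norm_deriv_le 0)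
  have hchord : ‖u x - u y‖ ≤ Λ := (hu.norm_sub_le x y).trans (mul_le_of_le_one_right hΛ.le hxy)
  have htδ : |t - y| ≤ δ := by
    calc |t - y| ≤ δ / Λ * Λ := ht.trans (by gcongr; exact min_le_left _ _)
      _ = δ := by field_simp
  have hnear {r z : ℝ} (hr : |r - z| ≤ windowRatio Λ δ * ‖u x - u y‖) :
      ‖u r - u z‖ ≤ ‖u x - u y‖ / 16 := by
    calc ‖u r - u z‖ ≤ Λ * (1 / (16 * Λ) * ‖u x - u y‖) :=
          (hu.norm_sub_le r z).trans (by gcongr; exact hr.trans (by gcongr; exact min_le_right _ _))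
      _ = ‖u x - u y‖ / 16 := by field_simp
  have hdiff : ‖u s - u t - (u x - u y)‖ ≤ ‖u x - u y‖ / 8 := by
    rw [sub_sub_sub_comm]
    linarith [norm_sub_le (u s - u x) (u t - u y), hnear hs, hnear ht]
  refine le_trans ?_ (tpRatio_ge_of_near_transversal hq (sub_ne_zero.2 hne)
    (abs_inner_le_of_lineProj_near (hosc t y htδ) horth) hdiff)
  gcongr
  exact hu.le_norm_deriv t

theorem criticalDist_le (hu : AdmissibleCurve lam Λ u) (hq : 2 < q) (hlam : 0 < lam) (hM : 0 < M)
    (hδ0 : 0 < δ) (hδ1 : δ ≤ 1) (hTP : TPe q u ≤ ENNReal.ofReal M)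
    (hosc : ∀ s t, |s - t| ≤ δ → ‖lineProj (deriv u s) - lineProj (deriv u t)‖ ≤ 1 / 4)
    {x y : ℝ} (hne : u x ≠ u y) (hxy : |x - y| ≤ 1) (horth : ⟪deriv u y, u x - u y⟫ = 0) :
    criticalDist q lam Λ M δ ≤ ‖u x - u y‖ := by
  have hq0 : 0 < q := by linarith
  have hq2 : 0 < q - 2 := by linarith
  have hΛ : 0 < Λ := (hlam.trans_le (hu.le_norm_deriv 0)).trans_le (hu.norm_deriv_le 0)
  set η := windowRatio Λ δ
  set d := ‖u x - u y‖
  have hη : 0 < η := windowRatio_pos hΛ hδ0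
  have hd0 : 0 < d := norm_pos_iff.2 (sub_ne_zero.2 hne)
  have hdΛ : d ≤ Λ := (hu.norm_sub_le x y).trans (mul_le_of_le_one_right hΛ.le hxy)
  have hρ1 : η * d ≤ 1 := by
    calc η * d ≤ δ / Λ * Λ := by gcongr; exact min_le_left _ _
      _ ≤ 1 := by rwa [div_mul_cancel₀ _ hΛ.ne']
  have hwin (z σ : ℝ) (hσ : σ ∈ Ioc (0 : ℝ) 1) : |z + η * d * σ - z| ≤ η * d := by
    have := hσ.1
    rw [add_sub_cancel_left, abs_of_pos (by positivity)]
    exact mul_le_of_le_one_right (by positivity) hσ.2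
  have henergy : (lam / (16 * d)) ^ q * (η * d) ^ 2 ≤ q * M :=
    mul_sq_le_of_le_tpKernel hu.contDiff hu.periodic hq0 hM.le hTP (by positivity) hρ1
      fun σ hσ τ hτ => hu.le_tpKernel_of_window hlam hq0.le hδ0 hosc hne hxy horth
        (hwin x σ hσ) (hwin y τ hτ)
  have hscale : (lam / (16 * d)) ^ q * (η * d) ^ 2 = η ^ 2 * (lam / 16) ^ q / d ^ (q - 2) := by
    rw [← div_div, Real.div_rpow (by positivity) hd0.le, Real.rpow_sub hd0, Real.rpow_two]
    field_simp
  rw [hscale, div_le_iff₀ (by positivity)] at henergy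
  calc criticalDist q lam Λ M δ ≤ (d ^ (q - 2)) ^ (1 / (q - 2)) := by
        unfold criticalDist
        gcongr
        rw [div_le_iff₀ (by positivity)]
        linarith
    _ = d := by rw [← Real.rpow_mul hd0.le, mul_one_div_cancel hq2.ne', Real.rpow_one]

end AdmissibleCurve

theorem exists_forall_norm_sub_le {F : Type*} [SeminormedAddCommGroup F] {u : ℝ → F} {δ : ℝ}
    (hu : Continuous u) (hper : Function.Periodic u 1) (hδ : δ ≤ 1 / 2) :
    ∃ y, ∃ h ∈ Icc δ (1 - δ), ∀ z, ∀ k ∈ Icc δ (1 - δ), ‖u (y + h) - u y‖ ≤ ‖u (z + k) - u z‖ := by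
  obtain ⟨⟨y, h⟩, ⟨-, hh⟩, hmin⟩ := (isCompact_Icc.prod isCompact_Icc).exists_isMinOn
    (s := Icc (0 : ℝ) 1 ×ˢ Icc δ (1 - δ)) ⟨(0, δ), ⟨by simp, ⟨le_rfl, by linarith⟩⟩⟩
    (f := fun p : ℝ × ℝ => ‖u (p.1 + p.2) - u p.1‖) (by fun_prop)
  refine ⟨y, h, hh, fun z k hk => ?_⟩
  have hz := hmin (show (Int.fract z, k) ∈ Icc (0 : ℝ) 1 ×ˢ Icc δ (1 - δ) from
    ⟨⟨Int.fract_nonneg z, (Int.fract_lt_one z).le⟩, hk⟩)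
  have hfract (k : ℝ) : u (Int.fract z + k) = u (z + k) := by
    rw [← hper.int_mul ⌊z⌋ (Int.fract z + k), Int.fract]
    congr 1
    ring
  simpa [hfract, by simpa using hfract 0] using hz

theorem inner_deriv_sub_eq_zero_of_isLocalMin {E : Type*} [NormedAddCommGroup E]
    [InnerProductSpace ℝ E] {u : ℝ → E} {u' c : E} {y : ℝ} (hu : HasDerivAt u u' y)
    (hmin : IsLocalMin (fun t => ‖c - u t‖) y) : ⟪u', c - u y⟫ = 0 := by
  have hsq : IsLocalMin (fun t => ‖c - u t‖ ^ 2) y := by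
    filter_upwards [hmin] with t ht
    gcongr
  have h := hsq.hasDerivAt_eq_zero (hu.const_sub c).norm_sq
  rw [inner_neg_right, real_inner_comm] at h
  linarith

namespace AdmissibleCurve

variable {n : ℕ} {q lam Λ M δ : ℝ} {u : ℝ → EuclideanSpace ℝ (Fin n)}

theorem ne_of_mem_Ioo (hu : AdmissibleCurve lam Λ u) (y : ℝ) {h : ℝ} (hh : h ∈ Ioo (0 : ℝ) 1) :
    u (y + h) ≠ u y := fun heq => by
  obtain ⟨k, hk⟩ := hu.exists_intCast_eq_sub heq
  rw [add_sub_cancel_left] at hk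
  rw [← hk] at hh
  have hk0 : 0 < k := by exact_mod_cast hh.1
  have hk1 : k < 1 := by exact_mod_cast hh.2
  omega

theorem min_le_norm_sub (hu : AdmissibleCurve lam Λ u) (hq : 2 < q) (hlam : 0 < lam) (hM : 0 < M)
    (hδ0 : 0 < δ) (hδ1 : δ ≤ 1 / 2) (hTP : TPe q u ≤ ENNReal.ofReal M)
    (hosc : ∀ s t, |s - t| ≤ δ → ‖lineProj (deriv u s) - lineProj (deriv u t)‖ ≤ 1 / 4)
    (z : ℝ) {k : ℝ} (hk : k ∈ Icc δ (1 - δ)) :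
    min (lam / 2 * δ) (criticalDist q lam Λ M δ) ≤ ‖u (z + k) - u z‖ := by
  obtain ⟨y, h, hh, hmin⟩ := exists_forall_norm_sub_le hu.contDiff.continuous hu.periodic hδ1
  refine le_trans ?_ (hmin z k hk)
  rcases eq_or_lt_of_le hh.1 with rfl | hδh
  · have hlocal := hu.mul_abs_sub_le_norm_sub hlam hosc (s := y + δ) (t := y)
    rw [add_sub_cancel_left, abs_of_pos hδ0] at hlocal
    exact (min_le_left _ _).trans (hlocal le_rfl)
  rcases eq_or_lt_of_le hh.2 with rfl | hhδ
  · have hlocal := hu.mul_abs_sub_le_norm_sub hlam hosc (s := y - δ) (t := y)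
    rw [sub_sub_cancel_left, abs_neg, abs_of_pos hδ0, ← hu.periodic (y - δ),
      sub_add_eq_add_sub, add_sub_assoc] at hlocal
    exact (min_le_left _ _).trans (hlocal le_rfl)
  have hinterior : ∀ᶠ t in 𝓝 y, y + h - t ∈ Ioo δ (1 - δ) :=
    (by fun_prop : ContinuousAt (fun t : ℝ => y + h - t) y).eventually
      (Ioo_mem_nhds (by linarith) (by linarith))
  have hcrit : IsLocalMin (fun t => ‖u (y + h) - u t‖) y := by
    filter_upwards [hinterior] with t ht
    simpa using hmin t (y + h - t) (Ioo_subset_Icc_self ht)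
  refine (min_le_right _ _).trans (hu.criticalDist_le hq hlam hM hδ0 (by linarith) hTP hosc
    (hu.ne_of_mem_Ioo y ⟨hδ0.trans hδh, by linarith⟩) ?_
    (inner_deriv_sub_eq_zero_of_isLocalMin (hu.hasDerivAt y) hcrit))
  rw [add_sub_cancel_left, abs_of_pos (by linarith)]
  linarith

theorem bilipLoop_of_lineProj_near (hu : AdmissibleCurve lam Λ u) (hq : 2 < q) (hlam : 0 < lam)
    (hM : 0 < M) (hδ0 : 0 < δ) (hδ1 : δ ≤ 1 / 2) (hTP : TPe q u ≤ ENNReal.ofReal M)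
    (hosc : ∀ s t, |s - t| ≤ δ → ‖lineProj (deriv u s) - lineProj (deriv u t)‖ ≤ 1 / 4) :
    BilipLoop (min (lam / 2 * δ) (criticalDist q lam Λ M δ)) Λ u := by
  have hΛ : 0 < Λ := (hlam.trans_le (hu.le_norm_deriv 0)).trans_le (hu.norm_deriv_le 0)
  have hcrit : 0 < criticalDist q lam Λ M δ := criticalDist_pos (by linarith) hlam hΛ hM hδ0
  set κ := min (lam / 2 * δ) (criticalDist q lam Λ M δ)
  have hκ : 0 < κ := lt_min (by positivity) hcrit
  have hforward (y h : ℝ) (h0 : 0 ≤ h) (h1 : h ≤ 1 / 2) : κ * h ≤ ‖u (y + h) - u y‖ := by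
    rcases le_total h δ with hhδ | hδh
    · have hlocal := hu.mul_abs_sub_le_norm_sub hlam hosc (s := y + h) (t := y)
      rw [add_sub_cancel_left, abs_of_nonneg h0] at hlocal
      refine le_trans ?_ (hlocal hhδ)
      gcongr
      exact (min_le_left _ _).trans (mul_le_of_le_one_right (by positivity) (by linarith))
    · exact (mul_le_of_le_one_right hκ.le (by linarith)).trans
        (hu.min_le_norm_sub hq hlam hM hδ0 hδ1 hTP hosc y ⟨hδh, by linarith⟩)
  refine ⟨hu.toLipLoop, fun x y => ?_⟩
  have hhalf := abs_le.1 (abs_wrap_le_half (x - y))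
  rw [← map_add_wrap_of_periodic hu.periodic x y]
  rcases le_total 0 (wrap (x - y)) with h | h
  · rw [abs_of_nonneg h]
    exact hforward y _ h hhalf.2
  · rw [abs_of_nonpos h, norm_sub_rev]
    simpa using hforward (y + wrap (x - y)) (-wrap (x - y)) (by linarith) (by linarith)

end AdmissibleCurve

theorem exists_bilipLoop_of_TPe_le (n : ℕ) {q lam Λ M : ℝ} (hq : 2 < q) (hlam : 0 < lam)
    (hΛ : 0 < Λ) (hM : 0 < M) :
    ∃ κ : ℝ, 0 < κ ∧ ∀ u : ℝ → EuclideanSpace ℝ (Fin n), AdmissibleCurve lam Λ u →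
      TPe q u ≤ ENNReal.ofReal M → BilipLoop κ Λ u := by
  have hα := one_sub_two_div_pos hq
  have hC := tangentLineConst_pos hq hlam hΛ hM
  set C := tangentLineConst q lam Λ M
  set δ : ℝ := min (1 / 2) ((1 / (4 * C)) ^ (1 / (1 - 2 / q)))
  have hδ0 : 0 < δ := lt_min (by norm_num) (by positivity)
  have hδ1 : δ ≤ 1 / 2 := min_le_left _ _
  refine ⟨min (lam / 2 * δ) (criticalDist q lam Λ M δ), lt_min (by positivity)
    (criticalDist_pos (by linarith) hlam hΛ hM hδ0), fun u hu hTP =>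
    hu.bilipLoop_of_lineProj_near hq hlam hM hδ0 hδ1 hTP fun s t hst => ?_⟩
  calc ‖lineProj (deriv u s) - lineProj (deriv u t)‖ ≤ C * |s - t| ^ (1 - 2 / q) :=
        hu.norm_lineProj_deriv_sub_le hlam hq hM.le hTP (by linarith)
    _ ≤ C * ((1 / (4 * C)) ^ (1 / (1 - 2 / q))) ^ (1 - 2 / q) := by
        gcongr
        exact hst.trans (min_le_right _ _)
    _ = 1 / 4 := by
        rw [← Real.rpow_mul (by positivity), one_div_mul_cancel hα.ne', Real.rpow_one]
        field_simp

/-! ### Taylor remainders -/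

section Scaling

theorem setLIntegral_unitSq_eq_wrap {F : ℝ × ℝ → ℝ≥0∞} (hF : Measurable F)
    (hper : ∀ y, Function.Periodic (fun x => F (x, y)) 1) :
    ∫⁻ p in unitSq, F p =
      ∫⁻ y in Ioc (0 : ℝ) 1, ∫⁻ h in Ioc (-(1 / 2) : ℝ) (1 / 2), F (y + h, y) := by
  rw [← setLIntegral_unitSq_comp_swap F,
    setLIntegral_unitSq_eq (F := fun p => F p.swap) (hF.comp measurable_swap)]
  refine lintegral_congr fun y => ?_
  have hshift := lintegral_comp_affine (fun x => F (x, y)) y one_ne_zero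
    (measurableSet_Ioc (a := -(1 / 2)) (b := 1 / 2))
  have hunit : y + 1 / 2 = y + -(1 / 2) + 1 := by ring
  simp only [one_mul, image_const_add_Ioc, abs_one, inv_one, ENNReal.ofReal_one] at hshift
  rw [hshift, hunit, lintegral_Ioc_add_one_eq (hper y)]
  rfl

theorem ofReal_mul_lintegral_comp_mul_le {τ : ℝ} (hτ : τ ∈ Ioc (0 : ℝ) 1) (f : ℝ → ℝ≥0∞) :
    ENNReal.ofReal τ * ∫⁻ h in Ioc (-(1 / 2) : ℝ) (1 / 2), f (τ * h) ≤
      ∫⁻ h in Ioc (-(1 / 2) : ℝ) (1 / 2), f h := by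
  have hscale := lintegral_comp_affine f 0 hτ.1.ne'
    (measurableSet_Ioc (a := -(1 / 2)) (b := 1 / 2))
  simp only [zero_add, abs_of_pos hτ.1] at hscale
  rw [hscale, ← mul_assoc, ← ENNReal.ofReal_mul hτ.1.le, mul_inv_cancel₀ hτ.1.ne',
    ENNReal.ofReal_one, one_mul]
  refine lintegral_mono_set ?_
  rintro _ ⟨σ, ⟨hσ₀, hσ₁⟩, rfl⟩
  obtain ⟨hτ₀, hτ₁⟩ := hτ
  constructor <;> dsimp only <;> nlinarith

theorem lintegral_lintegral_scale_le {φ : ℝ → ℝ≥0∞} (hφ : Measurable φ) :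
    ∫⁻ h in Ioc (-(1 / 2) : ℝ) (1 / 2), ∫⁻ τ in Ioc (0 : ℝ) 1, ENNReal.ofReal τ * φ (τ * h) ≤
      ∫⁻ h in Ioc (-(1 / 2) : ℝ) (1 / 2), φ h := by
  have hm : Measurable fun p : ℝ × ℝ => ENNReal.ofReal p.2 * φ (p.2 * p.1) :=
    measurable_snd.ennreal_ofReal.mul (hφ.comp (by fun_prop))
  rw [lintegral_lintegral_swap hm.aemeasurable]
  calc ∫⁻ τ in Ioc (0 : ℝ) 1, ∫⁻ h in Ioc (-(1 / 2) : ℝ) (1 / 2), ENNReal.ofReal τ * φ (τ * h)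
      = ∫⁻ τ in Ioc (0 : ℝ) 1, ENNReal.ofReal τ *
          ∫⁻ h in Ioc (-(1 / 2) : ℝ) (1 / 2), φ (τ * h) :=
        lintegral_congr fun τ => lintegral_const_mul' _ _ ENNReal.ofReal_ne_top
    _ ≤ ∫⁻ τ in Ioc (0 : ℝ) 1, ∫⁻ h in Ioc (-(1 / 2) : ℝ) (1 / 2), φ h :=
        setLIntegral_mono' measurableSet_Ioc fun τ hτ => ofReal_mul_lintegral_comp_mul_le hτ _
    _ = _ := by simp

end Scaling

section TaylorRemainder

variable {F : Type*} [NormedAddCommGroup F] [NormedSpace ℝ F] {q : ℝ} {v : ℝ → F}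

/-- The first-order Taylor remainder at `y` of a map on `ℝ/ℤ`; the increment `x - y` is read
modulo `1`. -/
def taylorRem (v : ℝ → F) (x y : ℝ) : F :=
  v x - v y - wrap (x - y) • deriv v y

/-- The density whose integral over the torus is the `q`-th power of the `L^q`-norm of the second
order difference quotients `taylorRem v x y / |x - y|²`. -/
def remainderKernel (q : ℝ) (v : ℝ → F) (x y : ℝ) : ℝ :=
  ‖taylorRem v x y‖ ^ q / |wrap (x - y)| ^ (2 * q)

theorem remainderKernel_nonneg (q : ℝ) (v : ℝ → F) (x y : ℝ) : 0 ≤ remainderKernel q v x y := by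
  unfold remainderKernel
  positivity

theorem periodic_remainderKernel_left (q : ℝ) (hv : Function.Periodic v 1) (y : ℝ) :
    Function.Periodic (fun x => remainderKernel q v x y) 1 := fun x => by
  simp only [remainderKernel, taylorRem, hv x, add_sub_right_comm, periodic_wrap (x - y)]

theorem remainderKernel_add_left (q : ℝ) (v : ℝ → F) (y : ℝ) {h : ℝ}
    (hh : h ∈ Ioc (-(1 / 2) : ℝ) (1 / 2)) :
    remainderKernel q v (y + h) y = ‖v (y + h) - v y - h • deriv v y‖ ^ q / |h| ^ (2 * q) := by
  rw [remainderKernel, taylorRem, add_sub_cancel_left, wrap_of_mem hh]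

theorem measurable_taylorRem {n : ℕ} {v : ℝ → EuclideanSpace ℝ (Fin n)} (hv : ContDiff ℝ 1 v) :
    Measurable fun p : ℝ × ℝ => taylorRem v p.1 p.2 := by
  have hcont := hv.continuous.measurable
  have hwrap : Measurable fun p : ℝ × ℝ => wrap (p.1 - p.2) := measurable_wrap.comp (by fun_prop)
  unfold taylorRem
  fun_prop

theorem measurable_remainderKernel {n : ℕ} {v : ℝ → EuclideanSpace ℝ (Fin n)} (q : ℝ)
    (hv : ContDiff ℝ 1 v) : Measurable fun p : ℝ × ℝ => remainderKernel q v p.1 p.2 := by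
  have hwrap : Measurable fun p : ℝ × ℝ => wrap (p.1 - p.2) := measurable_wrap.comp (by fun_prop)
  exact ((measurable_taylorRem hv).norm.pow_const q).div (hwrap.norm.pow_const _)

theorem sub_sub_smul_deriv_eq_integral [CompleteSpace F] (hv : ContDiff ℝ 1 v) (y h : ℝ) :
    v (y + h) - v y - h • deriv v y =
      h • ∫ τ in Ioc (0 : ℝ) 1, (deriv v (y + τ * h) - deriv v y) := by
  have hderiv (τ : ℝ) : HasDerivAt (fun τ => v (y + τ * h) - τ • (h • deriv v y))
      (h • (deriv v (y + τ * h) - deriv v y)) τ := by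
    have hline : HasDerivAt (fun τ : ℝ => y + τ * h) h τ := by
      simpa using ((hasDerivAt_id τ).mul_const h).const_add y
    have hcomp := (hv.differentiable one_ne_zero (y + τ * h)).hasDerivAt.scomp τ hline
    have hlin : HasDerivAt (fun τ : ℝ => τ • h • deriv v y) (h • deriv v y) τ := by
      simpa using (hasDerivAt_id τ).smul_const (h • deriv v y)
    rw [smul_sub]
    exact hcomp.sub hlin
  have hftc := intervalIntegral.integral_eq_sub_of_hasDerivAt (a := 0) (b := 1)
    (fun τ _ => hderiv τ) (Continuous.intervalIntegrable (by fun_prop) _ _)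
  rw [intervalIntegral.integral_smul, intervalIntegral.integral_of_le zero_le_one] at hftc
  rw [hftc]
  simp only [one_mul, one_smul, zero_mul, add_zero, zero_smul, sub_zero]
  abel

theorem rpow_enorm_integral_le {g : ℝ → F} (hq : 1 ≤ q) (hg : Continuous g) :
    ‖∫ τ in Ioc (0 : ℝ) 1, g τ‖ₑ ^ q ≤ ∫⁻ τ in Ioc (0 : ℝ) 1, ENNReal.ofReal (‖g τ‖ ^ q) := by
  have hq0 : 0 ≤ q := zero_le_one.trans hq
  calc ‖∫ τ in Ioc (0 : ℝ) 1, g τ‖ₑ ^ q ≤ (∫⁻ τ in Ioc (0 : ℝ) 1, ‖g τ‖ₑ) ^ q := by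
        gcongr
        exact enorm_integral_le_lintegral_enorm g
    _ ≤ ∫⁻ τ in Ioc (0 : ℝ) 1, ‖g τ‖ₑ ^ q :=
        rpow_lintegral_le_lintegral_rpow hq hg.enorm.measurable.aemeasurable
    _ = _ := by
        simp only [← ofReal_norm, ENNReal.ofReal_rpow_of_nonneg (norm_nonneg _) hq0]

theorem ofReal_remainder_le [CompleteSpace F] (hv : ContDiff ℝ 1 v) (hq : 1 ≤ q) (y : ℝ) {h : ℝ}
    (hh : h ≠ 0) :
    ENNReal.ofReal (‖v (y + h) - v y - h • deriv v y‖ ^ q / |h| ^ (2 * q)) ≤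
      ∫⁻ τ in Ioc (0 : ℝ) 1, ENNReal.ofReal τ *
        ENNReal.ofReal (‖deriv v (y + τ * h) - deriv v y‖ ^ q / |τ * h| ^ q) := by
  have hq0 : 0 ≤ q := zero_le_one.trans hq
  have hh0 : 0 < |h| := abs_pos.2 hh
  set I := ∫ τ in Ioc (0 : ℝ) 1, (deriv v (y + τ * h) - deriv v y) with hI
  have hratio : ‖v (y + h) - v y - h • deriv v y‖ ^ q / |h| ^ (2 * q) =
      (|h| ^ q)⁻¹ * ‖I‖ ^ q := by
    rw [sub_sub_smul_deriv_eq_integral hv, ← hI, norm_smul, Real.norm_eq_abs,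
      Real.mul_rpow hh0.le (norm_nonneg _), two_mul, Real.rpow_add hh0]
    field_simp
  rw [hratio, ENNReal.ofReal_mul (by positivity),
    ← ENNReal.ofReal_rpow_of_nonneg (norm_nonneg _) hq0, ofReal_norm]
  refine (mul_le_mul_right (rpow_enorm_integral_le hq (by fun_prop)) _).trans ?_
  rw [← lintegral_const_mul' _ _ ENNReal.ofReal_ne_top]
  refine setLIntegral_mono' measurableSet_Ioc fun τ ⟨hτ0, hτ1⟩ => ?_
  rw [← ENNReal.ofReal_mul (by positivity), ← ENNReal.ofReal_mul hτ0.le, abs_mul,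
    abs_of_pos hτ0, Real.mul_rpow hτ0.le hh0.le]
  refine ENNReal.ofReal_le_ofReal ?_
  have hτq : τ ^ q ≤ τ := by
    simpa using Real.rpow_le_rpow_of_exponent_ge hτ0 hτ1 hq
  rw [inv_mul_eq_div, ← mul_div_assoc, mul_div_mul_comm]
  exact le_mul_of_one_le_left (by positivity) ((one_le_div (by positivity)).2 hτq)

/-- Jensen's inequality for `R(y + h, y) = h ∫₀¹ (v'(y + τ h) - v'(y)) dτ`, followed by the
substitution `h ↦ τ h` for each fixed `τ`. -/
theorem setLIntegral_remainderKernel_le {n : ℕ} {v : ℝ → EuclideanSpace ℝ (Fin n)}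
    (hv : ContDiff ℝ 1 v) (hper : Function.Periodic v 1) (hq : 1 ≤ q) :
    ∫⁻ p in unitSq, ENNReal.ofReal (remainderKernel q v p.1 p.2) ≤
      sobSemPow (1 - 1 / q) q (deriv v) := by
  have hcont := hv.continuous_deriv le_rfl
  have hq0 : 0 < q := one_pos.trans_le hq
  rw [sobSemPow_eq hq0.ne',
    setLIntegral_unitSq_eq_wrap (measurable_remainderKernel q hv).ennreal_ofReal fun y x =>
      congrArg ENNReal.ofReal (periodic_remainderKernel_left q hper y x),
    setLIntegral_unitSq_eq_wrap (measurable_sobKernel q hcont) fun y x => by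
      simp only [periodic_deriv hper x, add_sub_right_comm, periodic_wrap (x - y)]]
  refine lintegral_mono fun y => ?_
  set φ : ℝ → ℝ≥0∞ := fun h => ENNReal.ofReal (‖deriv v (y + h) - deriv v y‖ ^ q / |h| ^ q)
    with hφ
  have hφm : Measurable φ := by
    have hnum : Measurable fun h : ℝ => ‖deriv v (y + h) - deriv v y‖ :=
      Continuous.measurable (by fun_prop)
    exact ((hnum.pow_const q).div (measurable_norm.pow_const q)).ennreal_ofReal
  calc ∫⁻ h in Ioc (-(1 / 2) : ℝ) (1 / 2), ENNReal.ofReal (remainderKernel q v (y + h) y)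
      ≤ ∫⁻ h in Ioc (-(1 / 2) : ℝ) (1 / 2), ∫⁻ τ in Ioc (0 : ℝ) 1,
          ENNReal.ofReal τ * φ (τ * h) := by
        refine setLIntegral_mono' measurableSet_Ioc fun h hh => ?_
        rw [remainderKernel_add_left q v y hh]
        rcases eq_or_ne h 0 with rfl | h0
        · simp [hq0.ne']
        · exact ofReal_remainder_le hv hq y h0
    _ ≤ ∫⁻ h in Ioc (-(1 / 2) : ℝ) (1 / 2), φ h := lintegral_lintegral_scale_le hφm
    _ = _ := setLIntegral_congr_fun measurableSet_Ioc fun h hh => by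
        simp only [hφ, add_sub_cancel_left, wrap_of_mem hh]

end TaylorRemainder

/-! ### The first variation of the tangent-point density -/

section WedgeCalculus

variable {n : ℕ} {a b c d : EuclideanSpace ℝ (Fin n)}

theorem wedgeSq_sub_smul (a b : EuclideanSpace ℝ (Fin n)) (h : ℝ) :
    wedgeSq a (b - h • a) = wedgeSq a b := by
  simp only [wedgeSq, norm_sub_sq_real, inner_sub_right, real_inner_smul_right,
    real_inner_self_eq_norm_sq, norm_smul, Real.norm_eq_abs, mul_pow, sq_abs, real_inner_comm a b]
  ring

theorem wedgeInner_sub_smul (a b c d : EuclideanSpace ℝ (Fin n)) (h : ℝ) :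
    wedgeInner a (b - h • a) c d = wedgeInner a b c d := by
  simp only [wedgeInner, inner_sub_left, real_inner_smul_left]
  ring

theorem wedgeInner_sub_smul_add_wedgeInner_sub_smul (a b c d : EuclideanSpace ℝ (Fin n)) (h : ℝ) :
    wedgeInner a b a (d - h • c) + wedgeInner a b c (b - h • a) =
      wedgeInner a b a d + wedgeInner a b c b := by
  simp only [wedgeInner, inner_sub_right, real_inner_smul_right]
  ring

theorem abs_wedgeInner_le (a b c d : EuclideanSpace ℝ (Fin n)) :
    |wedgeInner a b c d| ≤ 2 * (‖a‖ * ‖b‖ * (‖c‖ * ‖d‖)) := by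
  have hacbd : |⟪a, c⟫ * ⟪b, d⟫| ≤ ‖a‖ * ‖c‖ * (‖b‖ * ‖d‖) := by
    rw [abs_mul]
    gcongr <;> exact abs_real_inner_le_norm _ _
  have hadbc : |⟪a, d⟫ * ⟪b, c⟫| ≤ ‖a‖ * ‖d‖ * (‖b‖ * ‖c‖) := by
    rw [abs_mul]
    gcongr <;> exact abs_real_inner_le_norm _ _
  calc |wedgeInner a b c d| ≤ |⟪a, c⟫ * ⟪b, d⟫| + |⟪a, d⟫ * ⟪b, c⟫| := abs_sub _ _
    _ ≤ ‖a‖ * ‖c‖ * (‖b‖ * ‖d‖) + ‖a‖ * ‖d‖ * (‖b‖ * ‖c‖) := add_le_add hacbd hadbc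
    _ = _ := by ring

theorem wedgeSq_rpow_half_le {r : ℝ} (hr : 0 ≤ r) (a b : EuclideanSpace ℝ (Fin n)) :
    wedgeSq a b ^ (r / 2) ≤ (‖a‖ * ‖b‖) ^ r := by
  calc wedgeSq a b ^ (r / 2) ≤ ((‖a‖ * ‖b‖) ^ 2) ^ (r / 2) :=
        Real.rpow_le_rpow (wedgeSq_nonneg a b) (wedgeSq_le a b) (by positivity)
    _ = (‖a‖ * ‖b‖) ^ r := by
        rw [← Real.rpow_two, ← Real.rpow_mul (by positivity), mul_div_cancel₀ r two_ne_zero]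

variable {α β : ℝ → EuclideanSpace ℝ (Fin n)} {t : ℝ}

theorem hasDerivAt_wedgeSq (hα : HasDerivAt α c t) (hβ : HasDerivAt β d t) :
    HasDerivAt (fun t => wedgeSq (α t) (β t))
      (2 * (wedgeInner (α t) (β t) (α t) d + wedgeInner (α t) (β t) c (β t))) t := by
  refine ((hα.norm_sq.mul hβ.norm_sq).sub ((hα.inner ℝ hβ).pow 2)).congr_deriv ?_
  simp only [wedgeInner, real_inner_self_eq_norm_sq, real_inner_comm c (β t),
    real_inner_comm (α t) (β t)]
  ring

theorem hasDerivAt_tpRatio {q : ℝ} (hq : 2 ≤ q) (hα : HasDerivAt α c t) (hβ : HasDerivAt β d t)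
    (hne : β t ≠ 0) :
    HasDerivAt (fun t => tpRatio q (α t) (β t))
      (q * (wedgeSq (α t) (β t) ^ ((q - 2) / 2) / ‖β t‖ ^ (2 * q) *
          (wedgeInner (α t) (β t) (α t) d + wedgeInner (α t) (β t) c (β t)) -
        2 * (wedgeSq (α t) (β t) ^ (q / 2) / ‖β t‖ ^ (2 * q + 2) * ⟪β t, d⟫))) t := by
  have hpos : 0 < ‖β t‖ := norm_pos_iff.2 hne
  have hsq (b : EuclideanSpace ℝ (Fin n)) : (‖b‖ ^ 2) ^ q = ‖b‖ ^ (2 * q) := by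
    rw [← Real.rpow_two, ← Real.rpow_mul (norm_nonneg b)]
  have hnum := (hasDerivAt_wedgeSq hα hβ).rpow_const (p := q / 2) (Or.inr (by linarith))
  have hden := hβ.norm_sq.rpow_const (p := q) (Or.inr (by linarith))
  have hdiv := hnum.div hden (by positivity)
  simp only [hsq] at hdiv
  refine hdiv.congr_deriv ?_
  have hexp : q / 2 - 1 = (q - 2) / 2 := by ring
  have hpow : (‖β t‖ ^ 2) ^ (q - 1) = ‖β t‖ ^ (2 * q) / ‖β t‖ ^ 2 := by
    rw [Real.rpow_sub_one (by positivity), hsq]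
  rw [hpow, hexp, Real.rpow_add hpos, Real.rpow_two]
  field_simp

end WedgeCalculus

section PointwiseBounds

variable {n : ℕ} {q κ L ω ω' t : ℝ} {u v w : ℝ → EuclideanSpace ℝ (Fin n)}

theorem wedgeSq_deriv_taylorRem (u : ℝ → EuclideanSpace ℝ (Fin n)) (x y : ℝ) :
    wedgeSq (deriv u y) (taylorRem u x y) = wedgeSq (deriv u y) (u x - u y) :=
  wedgeSq_sub_smul _ _ _

theorem wedgeInner_deriv_taylorRem (u : ℝ → EuclideanSpace ℝ (Fin n)) (x y : ℝ)
    (c d : EuclideanSpace ℝ (Fin n)) :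
    wedgeInner (deriv u y) (taylorRem u x y) c d = wedgeInner (deriv u y) (u x - u y) c d :=
  wedgeInner_sub_smul _ _ _ _ _

theorem taylorRem_add_smul (hu : LipLoop L u) (hw : LipLoop ω w) (t x y : ℝ) :
    taylorRem (fun x => u x + t • w x) x y = taylorRem u x y + t • taylorRem w x y := by
  simp only [taylorRem, hu.deriv_add_smul hw]
  module

theorem add_rpow_le_two_rpow_mul {x y : ℝ} (hx : 0 ≤ x) (hy : 0 ≤ y) (hq : 1 ≤ q) :
    (x + y) ^ q ≤ 2 ^ (q - 1) * (x ^ q + y ^ q) := by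
  lift x to NNReal using hx
  lift y to NNReal using hy
  exact_mod_cast NNReal.rpow_add_le_mul_rpow_add_rpow x y hq

theorem remainderKernel_add_smul_le (hu : LipLoop L u) (hw : LipLoop ω w) (hq : 1 ≤ q)
    (ht : |t| ≤ 1) (x y : ℝ) :
    remainderKernel q (fun x => u x + t • w x) x y ≤
      2 ^ (q - 1) * (remainderKernel q u x y + remainderKernel q w x y) := by
  have htri : ‖taylorRem u x y + t • taylorRem w x y‖ ≤ ‖taylorRem u x y‖ + ‖taylorRem w x y‖ := by
    refine (norm_add_le _ _).trans (add_le_add_right ?_ _)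
    rw [norm_smul, Real.norm_eq_abs]
    exact mul_le_of_le_one_left (norm_nonneg _) ht
  rw [remainderKernel, remainderKernel, remainderKernel, taylorRem_add_smul hu hw, ← add_div,
    ← mul_div_assoc]
  gcongr
  exact (Real.rpow_le_rpow (norm_nonneg _) htri (by linarith)).trans
    (add_rpow_le_two_rpow_mul (norm_nonneg _) (norm_nonneg _) hq)

/-- The density that dominates the terms of the first variation containing `taylorRem w` linearly
and `taylorRem u` to the power `q - 1`; it is the Hölder interpolation of the remainder kernels of
`u` and `w`, see `mixedKernel_eq_rpow_mul_rpow`. -/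
def mixedKernel (q : ℝ) (u w : ℝ → EuclideanSpace ℝ (Fin n)) (x y : ℝ) : ℝ :=
  ‖taylorRem u x y‖ ^ (q - 1) * ‖taylorRem w x y‖ / |wrap (x - y)| ^ (2 * q)

theorem mixedKernel_nonneg (q : ℝ) (u w : ℝ → EuclideanSpace ℝ (Fin n)) (x y : ℝ) :
    0 ≤ mixedKernel q u w x y := by
  unfold mixedKernel
  positivity

theorem mixedKernel_self (hq : 1 ≤ q) (u : ℝ → EuclideanSpace ℝ (Fin n)) (x y : ℝ) :
    mixedKernel q u u x y = remainderKernel q u x y := by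
  rw [mixedKernel, remainderKernel,
    ← Real.rpow_add_one' (norm_nonneg _) (by linarith), sub_add_cancel]

theorem mixedKernel_eq_rpow_mul_rpow (hq : 1 ≤ q) (u w : ℝ → EuclideanSpace ℝ (Fin n)) (x y : ℝ) :
    mixedKernel q u w x y =
      remainderKernel q u x y ^ (1 - 1 / q) * remainderKernel q w x y ^ (1 / q) := by
  have hq0 : 0 < q := one_pos.trans_le hq
  have hexp : q * (1 - 1 / q) = q - 1 := by field_simp
  have hexp0 : 0 ≤ 1 - 1 / q := sub_nonneg.2 ((div_le_one hq0).2 hq)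
  have hden : 0 ≤ |wrap (x - y)| ^ (2 * q) := by positivity
  rw [remainderKernel, remainderKernel, Real.div_rpow (by positivity) hden,
    Real.div_rpow (by positivity) hden, ← Real.rpow_mul (norm_nonneg _),
    ← Real.rpow_mul (norm_nonneg _), mul_one_div_cancel hq0.ne', hexp, Real.rpow_one,
    div_mul_div_comm, ← Real.rpow_add_of_nonneg hden hexp0 (by positivity), sub_add_cancel,
    Real.rpow_one, mixedKernel]

theorem mixedKernel_le_add (hq : 1 ≤ q) (u w : ℝ → EuclideanSpace ℝ (Fin n)) (x y : ℝ) :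
    mixedKernel q u w x y ≤ remainderKernel q u x y + remainderKernel q w x y := by
  have hRu := remainderKernel_nonneg q u x y
  have hRw := remainderKernel_nonneg q w x y
  have hinv : 1 / q ≤ 1 := (div_le_one (one_pos.trans_le hq)).2 hq
  have hinv0 : 0 ≤ 1 / q := by positivity
  rw [mixedKernel_eq_rpow_mul_rpow hq]
  exact (Real.geom_mean_le_arith_mean2_weighted (sub_nonneg.2 hinv) hinv0 hRu hRw
    (sub_add_cancel _ _)).trans
    (add_le_add (mul_le_of_le_one_left hRu (sub_le_self _ hinv0)) (mul_le_of_le_one_left hRw hinv))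

theorem LipLoop.sub_eq_zero_of_wrap_eq_zero (hu : LipLoop L u) {x y : ℝ}
    (h : wrap (x - y) = 0) : u x - u y = 0 := by
  simpa [h] using hu.norm_sub_le_wrap x y

theorem BilipLoop.norm_sub_pos (hu : BilipLoop κ L u) (hκ : 0 < κ) {x y : ℝ}
    (h : 0 < |wrap (x - y)|) : 0 < ‖u x - u y‖ :=
  (mul_pos hκ h).trans_le (hu.mul_abs_wrap_le x y)

theorem abs_Mintegrand_le (hu : BilipLoop κ L u) (hκ : 0 < κ) (hv : LipLoop ω v) (hq : 2 ≤ q)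
    (w : ℝ → EuclideanSpace ℝ (Fin n)) (p : ℝ × ℝ) :
    |Mintegrand q u v w p| ≤ 2 * L ^ (q - 1) * ω / κ ^ (2 * q) * mixedKernel q u w p.1 p.2 := by
  obtain ⟨x, y⟩ := p
  have hL := hu.nonneg
  have hω := hv.nonneg
  have hW := wedgeSq_nonneg (deriv u y) (taylorRem u x y)
  simp only [Mintegrand, mixedKernel]
  rcases (abs_nonneg (wrap (x - y))).eq_or_lt' with h0 | hh
  · rw [hu.sub_eq_zero_of_wrap_eq_zero (abs_eq_zero.1 h0), norm_zero,
      Real.zero_rpow (by positivity), div_zero, zero_mul, abs_zero]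
    positivity
  have hb := hu.norm_sub_pos hκ hh
  set r := ‖taylorRem u x y‖
  set ρ := ‖taylorRem w x y‖
  have hr : 0 ≤ r := norm_nonneg _
  have hwedge : wedgeSq (deriv u y) (taylorRem u x y) ^ ((q - 2) / 2) ≤ (L * r) ^ (q - 2) := by
    refine (wedgeSq_rpow_half_le (by linarith) _ _).trans ?_
    gcongr
    exact hu.norm_deriv_le y
  have hinner : |wedgeInner (deriv u y) (taylorRem u x y) (deriv v y) (taylorRem w x y)| ≤
      2 * (L * r * (ω * ρ)) := by
    refine (abs_wedgeInner_le _ _ _ _).trans ?_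
    gcongr
    · exact hu.norm_deriv_le y
    · exact hv.norm_deriv_le y
  have hchord : (κ * |wrap (x - y)|) ^ (2 * q) ≤ ‖u x - u y‖ ^ (2 * q) := by
    gcongr
    exact hu.mul_abs_wrap_le x y
  rw [← wedgeSq_deriv_taylorRem, ← wedgeInner_deriv_taylorRem, ← taylorRem, abs_mul, abs_div,
    abs_of_nonneg (by positivity : 0 ≤ wedgeSq (deriv u y) (taylorRem u x y) ^ ((q - 2) / 2)),
    abs_of_pos (by positivity : 0 < ‖u x - u y‖ ^ (2 * q))]
  calc _ ≤ (L * r) ^ (q - 2) / (κ * |wrap (x - y)|) ^ (2 * q) * (2 * (L * r * (ω * ρ))) := by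
        gcongr
    _ = 2 * ((L * r) ^ (q - 2) * (L * r)) * ω * ρ / (κ * |wrap (x - y)|) ^ (2 * q) := by ring
    _ = _ := by
        rw [← Real.rpow_add_one' (by positivity) (by linarith), show q - 2 + 1 = q - 1 by ring,
          Real.mul_rpow hL hr, Real.mul_rpow hκ.le hh.le]
        ring

theorem abs_Aintegrand_le (hu : BilipLoop κ L u) (hκ : 0 < κ) (hv : LipLoop ω v)
    (hw : LipLoop ω' w) (hq : 0 ≤ q) (p : ℝ × ℝ) :
    |Aintegrand q u v w p| ≤ L ^ q * (ω * ω') / κ ^ (2 * q + 2) * remainderKernel q u p.1 p.2 := by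
  obtain ⟨x, y⟩ := p
  have hL := hu.nonneg
  have hω := hv.nonneg
  have hω' := hw.nonneg
  have hW := wedgeSq_nonneg (deriv u y) (taylorRem u x y)
  simp only [Aintegrand, remainderKernel]
  rcases (abs_nonneg (wrap (x - y))).eq_or_lt' with h0 | hh
  · rw [hu.sub_eq_zero_of_wrap_eq_zero (abs_eq_zero.1 h0), norm_zero,
      Real.zero_rpow (by positivity), div_zero, zero_mul, abs_zero]
    positivity
  have hb := hu.norm_sub_pos hκ hh
  set h := |wrap (x - y)|
  set r := ‖taylorRem u x y‖
  have hr : 0 ≤ r := norm_nonneg _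
  have hwedge : wedgeSq (deriv u y) (taylorRem u x y) ^ (q / 2) ≤ (L * r) ^ q := by
    refine (wedgeSq_rpow_half_le hq _ _).trans ?_
    gcongr
    exact hu.norm_deriv_le y
  have hinner : |⟪v x - v y, w x - w y⟫| ≤ ω * h * (ω' * h) :=
    (abs_real_inner_le_norm _ _).trans
      (mul_le_mul (hv.norm_sub_le_wrap x y) (hw.norm_sub_le_wrap x y) (norm_nonneg _)
        (by positivity))
  have hchord : (κ * h) ^ (2 * q + 2) ≤ ‖u x - u y‖ ^ (2 * q + 2) := by
    gcongr
    exact hu.mul_abs_wrap_le x y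
  rw [← wedgeSq_deriv_taylorRem, abs_mul, abs_div,
    abs_of_nonneg (by positivity : 0 ≤ wedgeSq (deriv u y) (taylorRem u x y) ^ (q / 2)),
    abs_of_pos (by positivity : 0 < ‖u x - u y‖ ^ (2 * q + 2))]
  calc _ ≤ (L * r) ^ q / (κ * h) ^ (2 * q + 2) * (ω * h * (ω' * h)) := by gcongr
    _ = _ := by
        rw [Real.mul_rpow hL hr, Real.mul_rpow hκ.le hh.le, Real.rpow_add hh,
          Real.rpow_two]
        field_simp

/-- The integrand of `deltaTP`. -/
def deltaTPIntegrand (q : ℝ) (u w : ℝ → EuclideanSpace ℝ (Fin n)) (p : ℝ × ℝ) : ℝ :=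
  Mintegrand q u u w p + Mintegrand q u w u p - 2 * Aintegrand q u u w p

theorem hasDerivAt_tpKernel (hu : LipLoop L u) (hw : LipLoop ω w) (hκ : 0 < κ)
    (ht : BilipLoop κ ω' fun x => u x + t • w x) (hq : 2 ≤ q) (p : ℝ × ℝ) :
    HasDerivAt (fun t => tpKernel q (fun x => u x + t • w x) p.1 p.2)
      (q * deltaTPIntegrand q (fun x => u x + t • w x) w p) t := by
  obtain ⟨x, y⟩ := p
  have htangent : HasDerivAt (fun t : ℝ => deriv (fun x => u x + t • w x) y) (deriv w y) t := by
    simp only [hu.deriv_add_smul hw]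
    simpa using ((hasDerivAt_id t).smul_const (deriv w y)).const_add (deriv u y)
  have hpoint (z : ℝ) : HasDerivAt (fun t : ℝ => u z + t • w z) (w z) t := by
    simpa using ((hasDerivAt_id t).smul_const (w z)).const_add (u z)
  have hchord : HasDerivAt (fun t : ℝ => u x + t • w x - (u y + t • w y)) (w x - w y) t :=
    (hpoint x).sub (hpoint y)
  rcases (abs_nonneg (wrap (x - y))).eq_or_lt' with h0 | hh
  · have hux := sub_eq_zero.1 (hu.sub_eq_zero_of_wrap_eq_zero (abs_eq_zero.1 h0))
    have hwx := sub_eq_zero.1 (hw.sub_eq_zero_of_wrap_eq_zero (abs_eq_zero.1 h0))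
    have hpow : (2 * q) ≠ 0 ∧ 2 * q + 2 ≠ 0 := by constructor <;> linarith
    simpa [tpKernel, tpRatio, deltaTPIntegrand, Mintegrand, Aintegrand, hux, hwx, hpow,
      Real.zero_rpow] using hasDerivAt_const t (0 : ℝ)
  · have hne := norm_pos_iff.1 (ht.norm_sub_pos hκ hh)
    refine (hasDerivAt_tpRatio hq htangent hchord hne).congr_deriv ?_
    rw [← wedgeInner_sub_smul_add_wedgeInner_sub_smul _ _ _ _ (wrap (x - y))]
    simp only [deltaTPIntegrand, Mintegrand, Aintegrand]
    ring

/-- The constant in the pointwise bound of the first variation of the tangent-point density. -/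
def deltaTPConst (q κ L : ℝ) : ℝ :=
  2 * L ^ (q - 1) * L / κ ^ (2 * q) + 2 * L ^ (q - 1) / κ ^ (2 * q) +
    2 * (L ^ q * L / κ ^ (2 * q + 2))

theorem deltaTPConst_nonneg (q : ℝ) (hκ : 0 < κ) (hL : 0 ≤ L) : 0 ≤ deltaTPConst q κ L := by
  unfold deltaTPConst
  positivity

theorem abs_deltaTPIntegrand_le (hu : BilipLoop κ L u) (hκ : 0 < κ) (hw : LipLoop ω w)
    (hq : 2 ≤ q) (p : ℝ × ℝ) :
    |deltaTPIntegrand q u w p| ≤ deltaTPConst q κ L *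
      (mixedKernel q u w p.1 p.2 + ω * remainderKernel q u p.1 p.2) := by
  have hL := hu.nonneg
  have hω := hw.nonneg
  have hR := remainderKernel_nonneg q u p.1 p.2
  have hmix := mixedKernel_nonneg q u w p.1 p.2
  have hMuw := abs_Mintegrand_le hu hκ hu.toLipLoop hq w p
  have hMwu := abs_Mintegrand_le hu hκ hw hq u p
  have hAuw := abs_Aintegrand_le hu hκ hu.toLipLoop hw (zero_le_two.trans hq) p
  rw [mixedKernel_self (one_le_two.trans hq)] at hMwu
  calc |deltaTPIntegrand q u w p|
      ≤ |Mintegrand q u u w p| + |Mintegrand q u w u p| + 2 * |Aintegrand q u u w p| := by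
        rw [← abs_two, ← abs_mul]
        exact (abs_sub _ _).trans (add_le_add_left (abs_add_le _ _) _)
    _ ≤ 2 * L ^ (q - 1) * L / κ ^ (2 * q) * mixedKernel q u w p.1 p.2 +
          (2 * L ^ (q - 1) / κ ^ (2 * q) + 2 * (L ^ q * L / κ ^ (2 * q + 2))) *
            (ω * remainderKernel q u p.1 p.2) := by
        refine (add_le_add (add_le_add hMuw hMwu)
          (mul_le_mul_of_nonneg_left hAuw two_pos.le)).trans_eq ?_
        ring
    _ ≤ _ := by
        rw [mul_add, deltaTPConst]
        gcongr
        · exact (le_add_of_nonneg_right (by positivity)).trans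
            (le_add_of_nonneg_right (by positivity))
        · exact le_add_of_nonneg_left (by positivity)

end PointwiseBounds

/-! ### Integrating the first variation -/

theorem integrable_of_lintegral_ofReal_ne_top {α : Type*} [MeasurableSpace α] {μ : Measure α}
    {f : α → ℝ} (hf : Measurable f) (hnonneg : ∀ a, 0 ≤ f a)
    (hfin : ∫⁻ a, ENNReal.ofReal (f a) ∂μ ≠ ⊤) : Integrable f μ :=
  (lintegral_ofReal_ne_top_iff_integrable hf.aestronglyMeasurable (ae_of_all μ hnonneg)).1 hfin

theorem integral_eq_toReal_lintegral_ofReal {α : Type*} [MeasurableSpace α] {μ : Measure α}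
    {f : α → ℝ} (hf : Measurable f) (hnonneg : ∀ a, 0 ≤ f a) :
    ∫ a, f a ∂μ = (∫⁻ a, ENNReal.ofReal (f a) ∂μ).toReal :=
  integral_eq_lintegral_of_nonneg_ae (ae_of_all μ hnonneg) hf.aestronglyMeasurable

section FirstVariation

variable {n : ℕ} {q κ L ω ω' t : ℝ} {u v w : ℝ → EuclideanSpace ℝ (Fin n)}

theorem integrableOn_remainderKernel (hv : LipLoop L v) (hq : 1 ≤ q)
    (hfin : sobSemPow (1 - 1 / q) q (deriv v) ≠ ⊤) :
    IntegrableOn (fun p => remainderKernel q v p.1 p.2) unitSq :=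
  integrable_of_lintegral_ofReal_ne_top (measurable_remainderKernel q hv.contDiff)
    (fun p => remainderKernel_nonneg q v p.1 p.2)
    (ne_top_of_le_ne_top hfin (setLIntegral_remainderKernel_le hv.contDiff hv.periodic hq))

theorem measurable_mixedKernel (q : ℝ) (hu : ContDiff ℝ 1 u) (hw : ContDiff ℝ 1 w) :
    Measurable fun p : ℝ × ℝ => mixedKernel q u w p.1 p.2 := by
  have hwrap : Measurable fun p : ℝ × ℝ => wrap (p.1 - p.2) := measurable_wrap.comp (by fun_prop)
  exact (((measurable_taylorRem hu).norm.pow_const _).mul (measurable_taylorRem hw).norm).div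
    (hwrap.norm.pow_const _)

theorem setLIntegral_mixedKernel_le (hu : LipLoop L u) (hw : LipLoop ω w)
    (hq : 1 ≤ q) :
    ∫⁻ p in unitSq, ENNReal.ofReal (mixedKernel q u w p.1 p.2) ≤
      sobSemPow (1 - 1 / q) q (deriv u) ^ (1 - 1 / q) *
        sobSemPow (1 - 1 / q) q (deriv w) ^ (1 / q) := by
  have hexp : 0 ≤ 1 - 1 / q := sub_nonneg.2 ((div_le_one (by positivity)).2 hq)
  have hexp' : 0 ≤ 1 / q := by positivity
  have hofReal (p : ℝ × ℝ) : ENNReal.ofReal (mixedKernel q u w p.1 p.2) =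
      ENNReal.ofReal (remainderKernel q u p.1 p.2) ^ (1 - 1 / q) *
        ENNReal.ofReal (remainderKernel q w p.1 p.2) ^ (1 / q) := by
    have hRu := remainderKernel_nonneg q u p.1 p.2
    have hRw := remainderKernel_nonneg q w p.1 p.2
    rw [mixedKernel_eq_rpow_mul_rpow hq, ENNReal.ofReal_mul (by positivity),
      ENNReal.ofReal_rpow_of_nonneg hRu hexp,
      ENNReal.ofReal_rpow_of_nonneg hRw hexp']
  simp only [hofReal]
  refine (ENNReal.lintegral_mul_norm_pow_le
    (measurable_remainderKernel q hu.contDiff).ennreal_ofReal.aemeasurable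
    (measurable_remainderKernel q hw.contDiff).ennreal_ofReal.aemeasurable
    hexp hexp' (sub_add_cancel _ _)).trans ?_
  gcongr
  · exact setLIntegral_remainderKernel_le hu.contDiff hu.periodic hq
  · exact setLIntegral_remainderKernel_le hw.contDiff hw.periodic hq

theorem integrableOn_mixedKernel (hu : LipLoop L u) (hw : LipLoop ω w)
    (hq : 1 ≤ q) (hufin : sobSemPow (1 - 1 / q) q (deriv u) ≠ ⊤)
    (hwfin : sobSemPow (1 - 1 / q) q (deriv w) ≠ ⊤) :
    IntegrableOn (fun p => mixedKernel q u w p.1 p.2) unitSq := by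
  refine integrable_of_lintegral_ofReal_ne_top (measurable_mixedKernel q hu.contDiff hw.contDiff)
    (fun p => mixedKernel_nonneg q u w p.1 p.2)
    (ne_top_of_le_ne_top ?_ (setLIntegral_mixedKernel_le hu hw hq))
  have hexp : 0 ≤ 1 - 1 / q := sub_nonneg.2 ((div_le_one (by positivity)).2 hq)
  exact ENNReal.mul_ne_top (ENNReal.rpow_ne_top_of_nonneg hexp hufin)
    (ENNReal.rpow_ne_top_of_nonneg (by positivity) hwfin)

theorem sobSemPow_toReal_rpow_le (hq : 0 < q) (s : ℝ) {r : ℝ} (hr : 0 ≤ r)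
    (f : ℝ → EuclideanSpace ℝ (Fin n)) :
    (sobSemPow s q f).toReal ^ r ≤ Wnorm s q f ^ (q * r) := by
  calc (sobSemPow s q f).toReal ^ r = ((sobSemPow s q f).toReal ^ (1 / q)) ^ (q * r) := by
        rw [← Real.rpow_mul ENNReal.toReal_nonneg]
        congr 1
        field_simp
    _ ≤ Wnorm s q f ^ (q * r) := by
        gcongr
        exact sobSemPow_toReal_rpow_le_Wnorm s q f

theorem integral_remainderKernel_le (hv : LipLoop L v) (hq : 1 ≤ q)
    (hfin : sobSemPow (1 - 1 / q) q (deriv v) ≠ ⊤) :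
    ∫ p in unitSq, remainderKernel q v p.1 p.2 ≤ Wnorm (1 - 1 / q) q (deriv v) ^ q := by
  rw [integral_eq_toReal_lintegral_ofReal (measurable_remainderKernel q hv.contDiff) fun p =>
    remainderKernel_nonneg q v p.1 p.2]
  refine (ENNReal.toReal_mono hfin
    (setLIntegral_remainderKernel_le hv.contDiff hv.periodic hq)).trans ?_
  simpa only [Real.rpow_one, mul_one] using
    sobSemPow_toReal_rpow_le (r := 1) (one_pos.trans_le hq) (1 - 1 / q) zero_le_one (deriv v)

theorem integral_mixedKernel_le (hu : LipLoop L u) (hw : LipLoop ω w)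
    (hq : 1 ≤ q) (hufin : sobSemPow (1 - 1 / q) q (deriv u) ≠ ⊤)
    (hwfin : sobSemPow (1 - 1 / q) q (deriv w) ≠ ⊤) :
    ∫ p in unitSq, mixedKernel q u w p.1 p.2 ≤
      Wnorm (1 - 1 / q) q (deriv u) ^ (q - 1) * Wnorm (1 - 1 / q) q (deriv w) := by
  have hq0 : 0 < q := one_pos.trans_le hq
  have hexp : 0 ≤ 1 - 1 / q := sub_nonneg.2 ((div_le_one hq0).2 hq)
  have hqexp : q * (1 - 1 / q) = q - 1 := by field_simp
  rw [integral_eq_toReal_lintegral_ofReal (measurable_mixedKernel q hu.contDiff hw.contDiff)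
    fun p => mixedKernel_nonneg q u w p.1 p.2]
  refine (ENNReal.toReal_mono
    (ENNReal.mul_ne_top (ENNReal.rpow_ne_top_of_nonneg hexp hufin)
      (ENNReal.rpow_ne_top_of_nonneg (by positivity) hwfin))
    (setLIntegral_mixedKernel_le hu hw hq)).trans ?_
  rw [ENNReal.toReal_mul, ← ENNReal.toReal_rpow, ← ENNReal.toReal_rpow]
  refine mul_le_mul ?_ (sobSemPow_toReal_rpow_le_Wnorm _ _ _) (by positivity)
    (Real.rpow_nonneg (Wnorm_nonneg _ _ _) _)
  simpa only [hqexp] using sobSemPow_toReal_rpow_le hq0 (1 - 1 / q) hexp (deriv u)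

theorem measurable_Mintegrand (q : ℝ) (hu : ContDiff ℝ 1 u) (hv : ContDiff ℝ 1 v)
    (hw : ContDiff ℝ 1 w) : Measurable (Mintegrand q u v w) := by
  have := hu.continuous
  have := hw.continuous
  have := hu.continuous_deriv le_rfl
  have := hv.continuous_deriv le_rfl
  have := hw.continuous_deriv le_rfl
  have hwedge : Continuous fun p : ℝ × ℝ => wedgeSq (deriv u p.2) (u p.1 - u p.2) :=
    continuous_wedgeSq_comp (by fun_prop) (by fun_prop)
  have hchord : Measurable fun p : ℝ × ℝ => ‖u p.1 - u p.2‖ :=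
    Continuous.measurable (by fun_prop)
  have hwrap : Measurable fun p : ℝ × ℝ => wrap (p.1 - p.2) := measurable_wrap.comp (by fun_prop)
  have hinner : Measurable fun p : ℝ × ℝ => wedgeInner (deriv u p.2) (u p.1 - u p.2) (deriv v p.2)
      (w p.1 - w p.2 - wrap (p.1 - p.2) • deriv w p.2) := by
    unfold wedgeInner
    fun_prop
  exact ((hwedge.measurable.pow_const _).div (hchord.pow_const _)).mul hinner

theorem measurable_Aintegrand (q : ℝ) (hu : ContDiff ℝ 1 u) (hv : Continuous v)
    (hw : Continuous w) : Measurable (Aintegrand q u v w) := by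
  have := hu.continuous
  have := hu.continuous_deriv le_rfl
  have hwedge : Continuous fun p : ℝ × ℝ => wedgeSq (deriv u p.2) (u p.1 - u p.2) :=
    continuous_wedgeSq_comp (by fun_prop) (by fun_prop)
  have hchord : Measurable fun p : ℝ × ℝ => ‖u p.1 - u p.2‖ :=
    Continuous.measurable (by fun_prop)
  have hinner : Measurable fun p : ℝ × ℝ => ⟪v p.1 - v p.2, w p.1 - w p.2⟫ :=
    Continuous.measurable (by fun_prop)
  exact ((hwedge.measurable.pow_const _).div (hchord.pow_const _)).mul hinner

theorem integrableOn_Mintegrand (hu : BilipLoop κ L u) (hκ : 0 < κ) (hv : LipLoop ω v)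
    (hw : LipLoop ω' w) (hq : 2 ≤ q) (hufin : sobSemPow (1 - 1 / q) q (deriv u) ≠ ⊤)
    (hwfin : sobSemPow (1 - 1 / q) q (deriv w) ≠ ⊤) :
    IntegrableOn (Mintegrand q u v w) unitSq :=
  ((integrableOn_mixedKernel hu.toLipLoop hw (one_le_two.trans hq) hufin
    hwfin).const_mul _).mono'
    (measurable_Mintegrand q hu.contDiff hv.contDiff hw.contDiff).aestronglyMeasurable
    (ae_of_all _ (abs_Mintegrand_le hu hκ hv hq w))

theorem integrableOn_Aintegrand (hu : BilipLoop κ L u) (hκ : 0 < κ) (hv : LipLoop ω v)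
    (hw : LipLoop ω' w) (hq : 1 ≤ q) (hufin : sobSemPow (1 - 1 / q) q (deriv u) ≠ ⊤) :
    IntegrableOn (Aintegrand q u v w) unitSq :=
  ((integrableOn_remainderKernel hu.toLipLoop hq hufin).const_mul _).mono'
    (measurable_Aintegrand q hu.contDiff hv.contDiff.continuous
      hw.contDiff.continuous).aestronglyMeasurable
    (ae_of_all _ (abs_Aintegrand_le hu hκ hv hw (zero_le_one.trans hq)))

theorem deltaTP_eq_integral (hu : BilipLoop κ L u) (hκ : 0 < κ) (hw : LipLoop ω w) (hq : 2 ≤ q)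
    (hufin : sobSemPow (1 - 1 / q) q (deriv u) ≠ ⊤)
    (hwfin : sobSemPow (1 - 1 / q) q (deriv w) ≠ ⊤) :
    deltaTP q u w = ∫ p in unitSq, deltaTPIntegrand q u w p := by
  have hMuw := integrableOn_Mintegrand hu hκ hu.toLipLoop hw hq hufin hwfin
  have hMwu := integrableOn_Mintegrand hu hκ hw hu.toLipLoop hq hufin hufin
  have hAuw := integrableOn_Aintegrand hu hκ hu.toLipLoop hw (one_le_two.trans hq) hufin
  calc deltaTP q u w = ∫ p in unitSq, (Mintegrand q u u w + Mintegrand q u w u -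
        fun p => 2 * Aintegrand q u u w p) p := by
        rw [integral_sub' (hMuw.add hMwu) (hAuw.const_mul 2), integral_add' hMuw hMwu,
          integral_const_mul]
        rfl
    _ = _ := rfl

theorem abs_deltaTP_le (hu : BilipLoop κ L u) (hκ : 0 < κ) (hw : LipLoop ω w) (hq : 2 ≤ q)
    (hufin : sobSemPow (1 - 1 / q) q (deriv u) ≠ ⊤)
    (hwfin : sobSemPow (1 - 1 / q) q (deriv w) ≠ ⊤) :
    |deltaTP q u w| ≤ deltaTPConst q κ L *
      (Wnorm (1 - 1 / q) q (deriv u) ^ (q - 1) * Wnorm (1 - 1 / q) q (deriv w) +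
        ω * Wnorm (1 - 1 / q) q (deriv u) ^ q) := by
  have hq1 : 1 ≤ q := one_le_two.trans hq
  have hω := hw.nonneg
  have hC := deltaTPConst_nonneg q hκ hu.nonneg
  have hmix := integrableOn_mixedKernel hu.toLipLoop hw hq1 hufin hwfin
  have hRu := (integrableOn_remainderKernel hu.toLipLoop hq1 hufin).const_mul ω
  rw [deltaTP_eq_integral hu hκ hw hq hufin hwfin]
  refine (norm_integral_le_of_norm_le ((hmix.fun_add hRu).const_mul _)
    (ae_of_all _ fun p => (Real.norm_eq_abs _).trans_le
      (abs_deltaTPIntegrand_le hu hκ hw hq p))).trans ?_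
  rw [integral_const_mul, integral_add hmix hRu, integral_const_mul]
  gcongr
  · exact integral_mixedKernel_le hu.toLipLoop hw hq1 hufin hwfin
  · exact integral_remainderKernel_le hu.toLipLoop hq1 hufin

theorem BilipLoop.add_smul_of_abs_le (hu : BilipLoop κ L u) (hw : LipLoop ω w) (ht : |t| ≤ 1)
    (htω : |t| * ω ≤ κ / 2) : BilipLoop (κ / 2) (L + ω) fun x => u x + t • w x :=
  (hu.add_smul hw t).mono (by linarith) (by linarith [mul_le_of_le_one_left hw.nonneg ht])

theorem abs_deltaTPIntegrand_add_smul_le (hu : BilipLoop κ L u) (hκ : 0 < κ) (hw : LipLoop ω w)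
    (hq : 2 ≤ q) (ht : |t| ≤ 1) (htω : |t| * ω ≤ κ / 2) (p : ℝ × ℝ) :
    |deltaTPIntegrand q (fun x => u x + t • w x) w p| ≤ deltaTPConst q (κ / 2) (L + ω) *
      ((1 + ω) * (2 ^ (q - 1) * (remainderKernel q u p.1 p.2 + remainderKernel q w p.1 p.2)) +
        remainderKernel q w p.1 p.2) := by
  have hq1 : 1 ≤ q := one_le_two.trans hq
  have hω := hw.nonneg
  refine (abs_deltaTPIntegrand_le (hu.add_smul_of_abs_le hw ht htω) (half_pos hκ) hw hq p).trans
    (mul_le_mul_of_nonneg_left ?_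
      (deltaTPConst_nonneg q (half_pos hκ) (add_nonneg hu.nonneg hω)))
  have hRt := remainderKernel_add_smul_le hu.toLipLoop hw hq1 ht p.1 p.2
  have hmix := mixedKernel_le_add hq1 (fun x => u x + t • w x) w p.1 p.2
  calc _ ≤ (1 + ω) * remainderKernel q (fun x => u x + t • w x) p.1 p.2 +
        remainderKernel q w p.1 p.2 := by linarith
    _ ≤ _ := by gcongr

theorem TPr_eq_integral (hq : 0 ≤ q) (hu : ContDiff ℝ 1 u) :
    TPr q u = 1 / q * ∫ p in unitSq, tpKernel q u p.1 p.2 := by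
  rw [TPr, TPe_eq, ENNReal.toReal_mul, ENNReal.toReal_ofReal (by positivity),
    integral_eq_toReal_lintegral_ofReal (measurable_tpKernel q hu) fun p =>
      tpKernel_nonneg q u p.1 p.2]

theorem integrableOn_tpKernel (hq : 0 < q) (hu : ContDiff ℝ 1 u) (hTP : TPe q u ≠ ⊤) :
    IntegrableOn (fun p => tpKernel q u p.1 p.2) unitSq :=
  integrable_of_lintegral_ofReal_ne_top (measurable_tpKernel q hu)
    (fun p => tpKernel_nonneg q u p.1 p.2)
    (ne_top_of_le_ne_top ENNReal.ofReal_ne_top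
      (setLIntegral_tpKernel_le hq (ENNReal.ofReal_toReal hTP).ge))

theorem hasDerivAt_TPr_add_smul (hu : BilipLoop κ L u) (hκ : 0 < κ) (hw : LipLoop ω w)
    (hq : 2 ≤ q) (hufin : sobSemPow (1 - 1 / q) q (deriv u) ≠ ⊤)
    (hwfin : sobSemPow (1 - 1 / q) q (deriv w) ≠ ⊤) (hTP : TPe q u ≠ ⊤) :
    HasDerivAt (fun t : ℝ => TPr q fun x => u x + t • w x) (deltaTP q u w) 0 := by
  have hq0 : 0 < q := two_pos.trans_le hq
  have hsmooth (t : ℝ) : ContDiff ℝ 1 fun x => u x + t • w x :=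
    (hu.toLipLoop.add_smul hw t).contDiff
  have hmeas : Measurable (deltaTPIntegrand q u w) :=
    ((measurable_Mintegrand q hu.contDiff hu.contDiff hw.contDiff).add
      (measurable_Mintegrand q hu.contDiff hw.contDiff hu.contDiff)).sub
      ((measurable_Aintegrand q hu.contDiff hu.contDiff.continuous
        hw.contDiff.continuous).const_mul 2)
  have hnhds : {t : ℝ | |t| ≤ 1 ∧ |t| * ω ≤ κ / 2} ∈ 𝓝 0 := by
    refine inter_mem ?_ ?_
    · exact (continuous_abs.tendsto 0).eventually_le_const (by simp)
    · exact ((continuous_abs.mul_const ω).tendsto 0).eventually_le_const (by simpa using hκ)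
  have hRu := integrableOn_remainderKernel hu.toLipLoop (one_le_two.trans hq) hufin
  have hRw := integrableOn_remainderKernel hw (one_le_two.trans hq) hwfin
  have hderiv := (hasDerivAt_integral_of_dominated_loc_of_deriv_le
    (F := fun t p => tpKernel q (fun x => u x + t • w x) p.1 p.2)
    (F' := fun t p => q * deltaTPIntegrand q (fun x => u x + t • w x) w p)
    (μ := volume.restrict unitSq) hnhds
    (Eventually.of_forall fun t => (measurable_tpKernel q (hsmooth t)).aestronglyMeasurable)
    (by simpa only [zero_smul, add_zero, IntegrableOn] using
      integrableOn_tpKernel hq0 hu.contDiff hTP)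
    (by simpa only [zero_smul, add_zero] using (hmeas.const_mul q).aestronglyMeasurable)
    (ae_of_all _ fun p t ht => by
      rw [norm_mul, Real.norm_of_nonneg hq0.le]
      exact mul_le_mul_of_nonneg_left
        (abs_deltaTPIntegrand_add_smul_le hu hκ hw hq ht.1 ht.2 p) hq0.le)
    ((((((hRu.add hRw).const_mul _).const_mul _).add hRw).const_mul _).const_mul q)
    (ae_of_all _ fun p t ht => hasDerivAt_tpKernel hu.toLipLoop hw (half_pos hκ)
      (hu.add_smul_of_abs_le hw ht.1 ht.2) hq p)).2
  simp only [fun t => TPr_eq_integral hq0.le (hsmooth t)]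
  refine (hderiv.const_mul (1 / q)).congr_deriv ?_
  simp only [zero_smul, add_zero, integral_const_mul]
  rw [deltaTP_eq_integral hu hκ hw hq hufin hwfin]
  field_simp

/-- The constant `c₁` in the estimate of the first variation, in terms of a uniform bi-Lipschitz
constant `κ`. -/
def firstVariationConst (q lam κ Λ : ℝ) : ℝ :=
  deltaTPConst q κ Λ * (1 / lam + (1 + morreyConst q))

theorem firstVariationConst_pos {lam Λ : ℝ} (hq : 2 < q) (hlam : 0 < lam) (hκ : 0 < κ)
    (hΛ : 0 < Λ) : 0 < firstVariationConst q lam κ Λ := by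
  have := morreyConst_pos hq
  unfold firstVariationConst deltaTPConst
  positivity

theorem abs_deltaTP_le_firstVariationConst_mul {lam Λ : ℝ} (hu : BilipLoop κ Λ u) (hκ : 0 < κ)
    (hlam : 0 < lam) (hspeed : ∀ x, lam ≤ ‖deriv u x‖) (hw : ContDiff ℝ 1 w)
    (hwper : Function.Periodic w 1) (hq : 2 < q)
    (hufin : sobSemPow (1 - 1 / q) q (deriv u) ≠ ⊤)
    (hwfin : sobSemPow (1 - 1 / q) q (deriv w) ≠ ⊤) :
    |deltaTP q u w| ≤ firstVariationConst q lam κ Λ * Wnorm (1 - 1 / q) q (deriv u) ^ q *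
      Wnorm (1 - 1 / q) q (deriv w) := by
  set N := Wnorm (1 - 1 / q) q (deriv u)
  set W := Wnorm (1 - 1 / q) q (deriv w)
  have hW : 0 ≤ W := Wnorm_nonneg _ _ _
  have hC := deltaTPConst_nonneg q hκ hu.nonneg
  have hwlip : LipLoop ((1 + morreyConst q) * W) w :=
    ⟨hw, hwper, norm_le_Wnorm hq (hw.continuous_deriv le_rfl) (periodic_deriv hwper) hwfin⟩
  have hlamN : lam ≤ N := le_Wnorm_of_le_norm (by linarith) _ hu.continuous_deriv hspeed
  have hNpos : 0 < N := hlam.trans_le hlamN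
  have hNpow : N ^ (q - 1) ≤ 1 / lam * N ^ q := by
    rw [Real.rpow_sub_one hNpos.ne', div_eq_inv_mul, one_div]
    gcongr
  calc |deltaTP q u w|
      ≤ deltaTPConst q κ Λ * (N ^ (q - 1) * W + (1 + morreyConst q) * W * N ^ q) :=
        abs_deltaTP_le hu hκ hwlip hq.le hufin hwfin
    _ ≤ deltaTPConst q κ Λ * (1 / lam * N ^ q * W + (1 + morreyConst q) * W * N ^ q) := by
        gcongr
    _ = _ := by
        rw [firstVariationConst]
        ring

end FirstVariation

/-- Lemma 2.1, first estimate: there is `c₁ = c₁(lam, Λ, M, n, q)`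
such that every embedded regular curve `u` with `lam ≤ |u'| ≤ Λ` and `TP(u) ≤ M`
satisfies `|δTP(u)[w]| ≤ c₁ ‖u'‖_{W^{1-1/q,q}}^q ‖w'‖_{W^{1-1/q,q}}`, where
`δTP(u)[w] = (d/dt) TP(u + t w)|_{t=0}`. -/
theorem first_variation_uniform_estimate (n : ℕ) (q lam Λ M : ℝ) (hq : 2 < q)
    (hlam : 0 < lam) (hΛ : lam ≤ Λ) (hM : 0 < M) :
    ∃ c₁ : ℝ, 0 < c₁ ∧ ∀ u w : ℝ → EuclideanSpace ℝ (Fin n),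
      ContDiff ℝ 1 u → Function.Periodic u 1 → Embedded u →
      sobSemPow (1 - 1 / q) q (deriv u) < ⊤ →
      (∀ x, lam ≤ ‖deriv u x‖) → (∀ x, ‖deriv u x‖ ≤ Λ) →
      TPe q u ≤ ENNReal.ofReal M →
      ContDiff ℝ 1 w → Function.Periodic w 1 →
      sobSemPow (1 - 1 / q) q (deriv w) < ⊤ →
      ∃ d : ℝ, HasDerivAt (fun t : ℝ => TPr q (fun x => u x + t • w x)) d 0 ∧
        |d| ≤ c₁ * Wnorm (1 - 1 / q) q (deriv u) ^ q * Wnorm (1 - 1 / q) q (deriv w) := by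
  have hΛ0 : 0 < Λ := hlam.trans_le hΛ
  obtain ⟨κ, hκ, hbilip⟩ := exists_bilipLoop_of_TPe_le n hq hlam hΛ0 hM
  refine ⟨firstVariationConst q lam κ Λ, firstVariationConst_pos hq hlam hκ hΛ0, ?_⟩
  intro u w hu huper hemb hufin hlow hup hTP hw hwper hwfin
  have hubil : BilipLoop κ Λ u := hbilip u ⟨⟨hu, huper, hup⟩, hemb, hlow⟩ hTP
  have hwlip : LipLoop ((1 + morreyConst q) * Wnorm (1 - 1 / q) q (deriv w)) w :=
    ⟨hw, hwper, norm_le_Wnorm hq (hw.continuous_deriv le_rfl) (periodic_deriv hwper) hwfin.ne⟩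
  exact ⟨deltaTP q u w,
    hasDerivAt_TPr_add_smul hubil hκ hwlip hq.le hufin.ne hwfin.ne
      (ne_top_of_le_ne_top ENNReal.ofReal_ne_top hTP),
    abs_deltaTP_le_firstVariationConst_mul hubil hκ hlam hlow hw hwper hq hufin.ne hwfin.ne⟩
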